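/- arXiv:1911.09921 — 2 statements merged into one kernel-verified Lean document; each statement's English description precedes it below -/
import Mathlib

section
/- Let D be a domain in ℂⁿ and U an open set with D ∩ U ≠ ∅ and D ∖ U ≠ ∅. Then for every z ∈ D ∩ U and X ∈ ℂⁿ one has K_D(z;X) ≥ K_{D∩U}(z;X) · inf_{w ∈ D ∩ ∂U} exp(g_D(w,z)). -/
/-!
The Green function contracts along analytic discs: if `f : 𝔻 → D` is holomorphic then
`g_D(f a, f 0) ≤ log |a|`. Hence a disc in `D` centred at `z ∈ U` can meet `∂U` only at points `a`
with `|a| ≥ m := inf exp g_D(·, z)`, so it maps the disc of radius `m` into `D ∩ U`, and rescaling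
by `m` gives the inequality of the Kobayashi metrics.

The contraction is the maximum principle for `u ∘ f - G`, with `u` a competitor for `g_D` and `G`
the Green function of the disc. Plurisubharmonicity only controls `u` on complex lines, so `u ∘ f`
is compared with a harmonic function `H` by doubling variables: `x` is penalised by
`k * |x - f ζ|²`, and where the comparison of `u x` with `H ζ` plus the penalty is critical, at
`(ζ₀, x₀)` say, the sub-mean value property is used on the line through `x₀` in the direction
`f' ζ₀`, along which `x - f ζ` is constant to first order.
-/

open Set Metric Filter Topology
open scoped Classical

noncomputable section

/-- `ℂⁿ` with the Euclidean norm. -/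
abbrev Cn (n : ℕ) := EuclideanSpace ℂ (Fin n)

/-- A function `u : ℂⁿ → [-∞,∞)` (with values in `EReal`) is plurisubharmonic on `D` if it
is upper semicontinuous on `D` and satisfies the sub-mean-value inequality on every closed
disc in a complex line contained in `D` (stated via continuous majorants on the boundary
circle, so as to handle the value `-∞`). -/
def PSHOn {n : ℕ} (u : Cn n → EReal) (D : Set (Cn n)) : Prop :=
  UpperSemicontinuousOn u D ∧
  ∀ a ∈ D, ∀ b : Cn n, ∀ r : ℝ, 0 < r →
    (∀ t : ℂ, ‖t‖ ≤ r → a + t • b ∈ D) →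
    ∀ g : ℝ → ℝ, Continuous g →
      (∀ θ : ℝ, u (a + ((r : ℂ) * Complex.exp (θ * Complex.I)) • b) ≤ (g θ : EReal)) →
      u a ≤ (((1 / (2 * Real.pi)) * ∫ θ in (0:ℝ)..(2 * Real.pi), g θ : ℝ) : EReal)

/-- The real exponential extended to `EReal`, with `exp(-∞) = 0` (the value at `⊤`,
irrelevant here, is also set to `0`). -/
def erexp (x : EReal) : ℝ := if x = ⊥ then 0 else if x = ⊤ then 0 else Real.exp x.toReal

/-- The Kobayashi metric of `D`:
`K_D(z;X) = inf {|α| : ∃ f : 𝔻 → D holomorphic, f 0 = z, α • f' 0 = X}`. -/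
def kobayashi {n : ℕ} (D : Set (Cn n)) (z X : Cn n) : ℝ :=
  sInf {c : ℝ | ∃ α : ℂ, c = ‖α‖ ∧ ∃ f : ℂ → Cn n,
    DifferentiableOn ℂ f (ball (0:ℂ) 1) ∧ MapsTo f (ball (0:ℂ) 1) D ∧
    f 0 = z ∧ α • deriv f 0 = X}

/-- The pluricomplex Green function of `D` with pole at `z`:
`g_D(z,w) = sup {u(w) : u psh on D, u < 0, u ≤ log‖·-z‖ + C near z for some C}`. -/
def greenFn {n : ℕ} (D : Set (Cn n)) (z w : Cn n) : EReal :=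
  sSup {t : EReal | ∃ u : Cn n → EReal, PSHOn u D ∧ (∀ x ∈ D, u x < 0) ∧
    (∃ C : ℝ, ∀ᶠ x in 𝓝[D] z, u x ≤ ((Real.log ‖x - z‖ + C : ℝ) : EReal)) ∧ t = u w}

section CircleAverage

open Real InnerProductSpace

variable {E : Type*} [NormedAddCommGroup E] [InnerProductSpace ℂ E]

lemma circleAverage_norm_sq {h : ℂ → E} {c : ℂ} {r : ℝ}
    (hh : AnalyticOnNhd ℂ h (closedBall c |r|)) :
    circleAverage (fun ζ => ‖h ζ‖ ^ 2) c r =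
      ‖h c‖ ^ 2 + circleAverage (fun ζ => ‖h ζ - h c‖ ^ 2) c r := by
  set L : ℂ → ℝ := fun ζ => ‖h c‖ ^ 2 + 2 * (inner ℂ (h c) (h ζ - h c)).re with hL
  have hL_harmonic : HarmonicOnNhd L (closedBall c |r|) := fun ζ hζ => by
    have hinner : AnalyticAt ℂ (fun ζ => inner ℂ (h c) (h ζ - h c)) ζ :=
      ((innerSL ℂ (h c)).analyticAt _).comp ((hh ζ hζ).sub analyticAt_const)
    exact (harmonicAt_const _).add (hinner.harmonicAt_re.const_smul (c := (2 : ℝ)))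
  have hL_center : L c = ‖h c‖ ^ 2 := by simp [hL]
  have hexpand : (fun ζ => ‖h ζ‖ ^ 2) = fun ζ => L ζ + ‖h ζ - h c‖ ^ 2 := by
    funext ζ
    have := norm_add_sq (𝕜 := ℂ) (h c) (h ζ - h c)
    rwa [add_sub_cancel] at this
  have hcont : ContinuousOn (fun ζ => ‖h ζ - h c‖ ^ 2) (sphere c |r|) :=
    ((hh.continuousOn.mono sphere_subset_closedBall).sub continuousOn_const).norm.pow 2
  rw [hexpand, circleAverage_fun_add
    (hL_harmonic.continuousOn.mono sphere_subset_closedBall).circleIntegrable'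
    hcont.circleIntegrable', hL_harmonic.circleAverage_eq, hL_center]

lemma circleAverage_id_norm_sq (c : ℂ) (r : ℝ) :
    circleAverage (fun ζ => ‖ζ‖ ^ 2) c r = ‖c‖ ^ 2 + r ^ 2 := by
  rw [circleAverage_norm_sq (h := fun ζ => ζ) (fun _ _ => analyticAt_id)]
  congr 1
  refine circleAverage_const_on_circle fun ζ hζ => ?_
  rw [← dist_eq_norm, mem_sphere.1 hζ, sq_abs]

lemma eventually_mul_norm_sub_sq_le {h : ℂ → E} {ζ₀ : ℂ} (hh : DifferentiableAt ℂ h ζ₀)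
    (hh' : deriv h ζ₀ = 0) (k : ℝ) {ε : ℝ} (hε : 0 < ε) :
    ∀ᶠ ζ in 𝓝 ζ₀, k * ‖h ζ - h ζ₀‖ ^ 2 ≤ ε * ‖ζ - ζ₀‖ ^ 2 := by
  have hlittle : (fun ζ => h ζ - h ζ₀) =o[𝓝 ζ₀] fun ζ => ζ - ζ₀ := by
    simpa [hh'] using hh.hasDerivAt.isLittleO
  filter_upwards [((hlittle.norm_norm.pow two_pos).const_mul_left k).def hε] with ζ hζ
  rw [norm_of_nonneg (sq_nonneg ‖ζ - ζ₀‖)] at hζ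
  exact (le_abs_self _).trans hζ

/- The Laplacian of the averaged function at `ζ₀` is `-4 * ε`. -/
lemma eventually_circleAverage_lt [CompleteSpace E] {H : ℂ → ℝ} {h : ℂ → E} {ζ₀ : ℂ} {ε k : ℝ}
    (hε : 0 < ε) (hH : HarmonicAt H ζ₀) (hh : AnalyticAt ℂ h ζ₀) (hh' : deriv h ζ₀ = 0) :
    ∀ᶠ r in 𝓝[>] (0 : ℝ), circleAverage (fun ζ => H ζ - ε * ‖ζ‖ ^ 2 + k * ‖h ζ‖ ^ 2) ζ₀ r <
      H ζ₀ - ε * ‖ζ₀‖ ^ 2 + k * ‖h ζ₀‖ ^ 2 := by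
  have hsmall := eventually_mul_norm_sub_sq_le hh.differentiableAt hh' k (half_pos hε)
  filter_upwards [nhdsWithin_le_nhds (eventually_closedBall_subset
    (hH.eventually.and (hh.eventually_analyticAt.and hsmall))), self_mem_nhdsWithin]
    with r hball hr
  rw [mem_Ioi] at hr
  rw [← abs_of_pos hr] at hball
  have hHball : HarmonicOnNhd H (closedBall ζ₀ |r|) := fun ζ hζ => (hball hζ).1
  have hhball : AnalyticOnNhd ℂ h (closedBall ζ₀ |r|) := fun ζ hζ => (hball hζ).2.1
  have hHi : CircleIntegrable H ζ₀ r :=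
    (hHball.continuousOn.mono sphere_subset_closedBall).circleIntegrable'
  have hhc : ContinuousOn h (sphere ζ₀ |r|) := hhball.continuousOn.mono sphere_subset_closedBall
  have hidi : CircleIntegrable (fun ζ : ℂ => ε * ‖ζ‖ ^ 2) ζ₀ r :=
    ContinuousOn.circleIntegrable' (by fun_prop)
  have hhi : CircleIntegrable (fun ζ => k * ‖h ζ‖ ^ 2) ζ₀ r :=
    ContinuousOn.circleIntegrable' (by fun_prop)
  have hremainder : k * circleAverage (fun ζ => ‖h ζ - h ζ₀‖ ^ 2) ζ₀ r ≤ ε / 2 * r ^ 2 := by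
    rw [← smul_eq_mul, ← circleAverage_fun_smul]
    refine circleAverage_mono_on_of_le_circle (ContinuousOn.circleIntegrable' (by fun_prop))
      fun ζ hζ => ?_
    simpa [← dist_eq_norm, mem_sphere.1 hζ] using (hball (sphere_subset_closedBall hζ)).2.2
  calc circleAverage (fun ζ => H ζ - ε * ‖ζ‖ ^ 2 + k * ‖h ζ‖ ^ 2) ζ₀ r
      = circleAverage H ζ₀ r - ε * circleAverage (fun ζ => ‖ζ‖ ^ 2) ζ₀ r
          + k * circleAverage (fun ζ => ‖h ζ‖ ^ 2) ζ₀ r := by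
        rw [circleAverage_fun_add (hHi.fun_sub hidi) hhi, circleAverage_fun_sub hHi hidi]
        simp only [← smul_eq_mul, circleAverage_fun_smul]
    _ = H ζ₀ - ε * ‖ζ₀‖ ^ 2 + k * ‖h ζ₀‖ ^ 2 - ε * r ^ 2
          + k * circleAverage (fun ζ => ‖h ζ - h ζ₀‖ ^ 2) ζ₀ r := by
        rw [hHball.circleAverage_eq, circleAverage_id_norm_sq, circleAverage_norm_sq hhball]
        ring
    _ < H ζ₀ - ε * ‖ζ₀‖ ^ 2 + k * ‖h ζ₀‖ ^ 2 := by
        linarith [mul_pos hε (pow_pos hr 2)]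

end CircleAverage

section Compactness

variable {X : Type*} [TopologicalSpace X] {f : X → EReal} {g d φ : X → ℝ} {T : Set X}

lemma eventually_prod_nhdsWithin_lt_add_mul {x : X} (hf : UpperSemicontinuousWithinAt f T x)
    (hfx : f x < ⊤) (hg : ContinuousWithinAt g T x) (hd : ContinuousWithinAt d T x)
    (hd_nonneg : ∀ y ∈ T, 0 ≤ d y) (hx : x ∈ T) (hfg : d x = 0 → f x < g x) :
    ∀ᶠ q : ℝ × X in atTop ×ˢ 𝓝[T] x, f q.2 < (g q.2 + q.1 * d q.2 : ℝ) := by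
  rcases (hd_nonneg x hx).eq_or_lt' with hdx | hdx
  · obtain ⟨c, hfc, hcg⟩ := EReal.lt_iff_exists_real_btwn.1 (hfg hdx)
    filter_upwards [(hf c hfc).prod_inr _,
      (hg.eventually_const_lt (EReal.coe_lt_coe_iff.1 hcg)).prod_inr _,
      (eventually_ge_atTop 0).prod_inl _, eventually_mem_nhdsWithin.prod_inr _] with q hfq hgq hk hq
    refine hfq.trans (EReal.coe_lt_coe_iff.2 ?_)
    linarith [mul_nonneg hk (hd_nonneg _ hq)]
  · obtain ⟨c, hfc, -⟩ := EReal.lt_iff_exists_real_btwn.1 hfx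
    have hlim : Tendsto (fun q : ℝ × X => g q.2 + q.1 * d q.2) (atTop ×ˢ 𝓝[T] x) atTop :=
      (hg.tendsto.comp tendsto_snd).add_atTop
        (tendsto_fst.atTop_mul_pos hdx (hd.tendsto.comp tendsto_snd))
    filter_upwards [(hf c hfc).prod_inr _, hlim.eventually_gt_atTop c] with q hfq hcq
    exact hfq.trans (EReal.coe_lt_coe_iff.2 hcq)

lemma eventually_forall_mem_lt_add_mul (hT : IsCompact T) (hf : UpperSemicontinuousOn f T)
    (hf_top : ∀ x ∈ T, f x < ⊤) (hg : ContinuousOn g T) (hd : ContinuousOn d T)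
    (hd_nonneg : ∀ x ∈ T, 0 ≤ d x) (hfg : ∀ x ∈ T, d x = 0 → f x < g x) :
    ∀ᶠ k : ℝ in atTop, ∀ x ∈ T, f x < (g x + k * d x : ℝ) := by
  refine hT.induction_on (p := fun S => ∀ᶠ k : ℝ in atTop, ∀ x ∈ S, f x < (g x + k * d x : ℝ))
    (by simp) (fun S S' hSS' hS' => hS'.mono fun k hk x hx => hk x (hSS' hx))
    (fun S S' hS hS' => (hS.and hS').mono fun k hk x hx => hx.elim (hk.1 x) (hk.2 x))
    fun x hx => ?_
  obtain ⟨P, hP, Q, hQ, hPQ⟩ := eventually_prod_iff.1 (eventually_prod_nhdsWithin_lt_add_mul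
    (hf x hx) (hf_top x hx) (hg x hx) (hd x hx) hd_nonneg hx (hfg x hx))
  exact ⟨{y | Q y}, hQ, hP.mono fun k hk y hy => hPQ hk hy⟩

lemma exists_touching_of_isCompact (hT : IsCompact T) (hf : UpperSemicontinuousOn f T)
    (hf_top : ∀ x ∈ T, f x < ⊤) (hφ : ContinuousOn φ T) {x₀ : X} (hx₀ : x₀ ∈ T)
    (hfx₀ : f x₀ ≠ ⊥) :
    ∃ c : ℝ, (∀ x ∈ T, f x ≤ (φ x + c : ℝ)) ∧ ∃ p ∈ T, f p = (φ p + c : ℝ) := by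
  have hφ_usc : UpperSemicontinuousOn (fun x => ((-φ x : ℝ) : EReal)) T :=
    (continuous_coe_real_ereal.comp_continuousOn hφ.neg).upperSemicontinuousOn
  obtain ⟨p, hp, hmax⟩ := UpperSemicontinuousOn.exists_isMaxOn ⟨x₀, hx₀⟩ hT
    (hf.add' hφ_usc fun x _ => EReal.continuousAt_add (by simp) (by simp))
  have hfp_bot : f p ≠ ⊥ := fun hbot => by
    have := hmax hx₀
    simp [hbot, hfx₀] at this
  lift f p to ℝ using ⟨(hf_top p hp).ne, hfp_bot⟩ with v hv
  refine ⟨v - φ p, fun x hx => ?_, p, hp, by rw [add_sub_cancel, hv]⟩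
  calc f x = f x + ((-φ x : ℝ) : EReal) + φ x := by
        rw [add_assoc, ← EReal.coe_add, neg_add_cancel, EReal.coe_zero, add_zero]
    _ ≤ f p + ((-φ p : ℝ) : EReal) + φ x := add_le_add_left (hmax hx) _
    _ = (φ x + (v - φ p) : ℝ) := by rw [← hv]; norm_cast; ring

end Compactness

section PSH

variable {n : ℕ} {D : Set (Cn n)} {u : Cn n → EReal}

lemma PSHOn.le_circleAverage (hu : PSHOn u D) {a b : Cn n} {c : ℂ} {r : ℝ} (hr : 0 < r)
    (hD : ∀ ζ ∈ closedBall c r, a + (ζ - c) • b ∈ D) {g : ℂ → ℝ} (hg : ContinuousOn g (sphere c r))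
    (h : ∀ ζ ∈ sphere c r, u (a + (ζ - c) • b) ≤ g ζ) :
    u a ≤ (Real.circleAverage g c r : ℝ) := by
  have ha : a ∈ D := by simpa using hD c (mem_closedBall_self hr.le)
  have key := hu.2 a ha b r hr
    (fun t ht => by simpa using hD (c + t) (by simpa using ht))
    (fun θ => g (circleMap c r θ))
    (hg.comp_continuous (continuous_circleMap c r) (circleMap_mem_sphere c hr.le))
    (fun θ => by simpa [circleMap] using h _ (circleMap_mem_sphere c hr.le θ))
  rwa [one_div] at key

open InnerProductSpace in
lemma PSHOn.lt_of_eventually_le_on_line (hu : PSHOn u D) {E : Type*} [NormedAddCommGroup E]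
    [InnerProductSpace ℂ E] [CompleteSpace E] {x₀ b : Cn n} {ζ₀ : ℂ} {H : ℂ → ℝ} {h : ℂ → E}
    {ε k : ℝ} (hε : 0 < ε) (hD : D ∈ 𝓝 x₀) (hH : HarmonicAt H ζ₀) (hh : AnalyticAt ℂ h ζ₀)
    (hh' : deriv h ζ₀ = 0)
    (hle : ∀ᶠ ζ in 𝓝 ζ₀, u (x₀ + (ζ - ζ₀) • b) ≤ (H ζ - ε * ‖ζ‖ ^ 2 + k * ‖h ζ‖ ^ 2 : ℝ)) :
    u x₀ < (H ζ₀ - ε * ‖ζ₀‖ ^ 2 + k * ‖h ζ₀‖ ^ 2 : ℝ) := by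
  have hline : ∀ᶠ ζ in 𝓝 ζ₀, x₀ + (ζ - ζ₀) • b ∈ D :=
    ContinuousAt.eventually_mem (by fun_prop) (by simpa using hD)
  have hball := eventually_closedBall_subset
    ((hle.and hline).and (hH.eventually.and hh.eventually_analyticAt))
  obtain ⟨r, ⟨hlt, hball⟩, hr⟩ := ((eventually_circleAverage_lt (k := k) hε hH hh hh').and
    (nhdsWithin_le_nhds hball) |>.and self_mem_nhdsWithin).exists
  have hcont : ContinuousOn (fun ζ => H ζ - ε * ‖ζ‖ ^ 2 + k * ‖h ζ‖ ^ 2) (sphere ζ₀ r) := by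
    have hHc : ContinuousOn H (sphere ζ₀ r) := fun ζ hζ =>
      (hball (sphere_subset_closedBall hζ)).2.1.1.continuousAt.continuousWithinAt
    have hhc : ContinuousOn h (sphere ζ₀ r) := fun ζ hζ =>
      (hball (sphere_subset_closedBall hζ)).2.2.continuousAt.continuousWithinAt
    fun_prop
  exact (hu.le_circleAverage hr (fun ζ hζ => (hball hζ).1.2) hcont
    fun ζ hζ => (hball (sphere_subset_closedBall hζ)).1.1).trans_lt (EReal.coe_lt_coe_iff.2 hlt)

/-- Doubling of variables: a majorant of `(ζ, x) ↦ u x` on `ℂ × ℂⁿ` that forces `x` towards `F ζ`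
as `k → ∞`, and is strictly superharmonic along the line `x` tangent to the disc `F` at `ζ`. -/
def barrier (F : ℂ → Cn n) (H : ℂ → ℝ) (ε k : ℝ) (p : ℂ × Cn n) : ℝ :=
  H p.1 - ε * ‖p.1‖ ^ 2 + k * ‖p.2 - F p.1‖ ^ 2

open InnerProductSpace in
lemma PSHOn.lt_barrier_of_eventually_le (hu : PSHOn u D) {F : ℂ → Cn n} {H : ℂ → ℝ} {ε k : ℝ}
    (hε : 0 < ε) {p₀ : ℂ × Cn n} (hD : D ∈ 𝓝 p₀.2) (hF : AnalyticAt ℂ F p₀.1)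
    (hH : HarmonicAt H p₀.1) (hle : ∀ᶠ p in 𝓝 p₀, u p.2 ≤ barrier F H ε k p) :
    u p₀.2 < barrier F H ε k p₀ := by
  obtain ⟨ζ₀, x₀⟩ := p₀
  set tangent : ℂ → Cn n := fun ζ => x₀ + (ζ - ζ₀) • deriv F ζ₀
  have htangent_center : tangent ζ₀ = x₀ := by simp [tangent]
  have htangent_deriv : HasDerivAt tangent (deriv F ζ₀) ζ₀ := by
    simpa [tangent] using
      (((hasDerivAt_id ζ₀).sub_const ζ₀).smul_const (deriv F ζ₀)).const_add x₀
  have hdiff_deriv : deriv (fun ζ => tangent ζ - F ζ) ζ₀ = 0 := by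
    rw [(htangent_deriv.fun_sub hF.differentiableAt.hasDerivAt).deriv, sub_self]
  have hline : Tendsto (fun ζ => (ζ, tangent ζ)) (𝓝 ζ₀) (𝓝 (ζ₀, x₀)) := by
    have : Continuous fun ζ => (ζ, tangent ζ) := by fun_prop
    simpa only [htangent_center] using this.tendsto ζ₀
  have := hu.lt_of_eventually_le_on_line hε hD hH (by fun_prop) hdiff_deriv (hline.eventually hle)
  rwa [htangent_center] at this

lemma barrier_add_const (F : ℂ → Cn n) (H : ℂ → ℝ) (ε k c : ℝ) (p : ℂ × Cn n) :
    barrier F (fun ζ => H ζ + c) ε k p = barrier F H ε k p + c := by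
  simp only [barrier]
  ring

lemma barrier_apply_self (F : ℂ → Cn n) (H : ℂ → ℝ) (ε k : ℝ) (ζ : ℂ) :
    barrier F H ε k (ζ, F ζ) = H ζ - ε * ‖ζ‖ ^ 2 := by
  simp [barrier]

lemma continuousOn_barrier {F : ℂ → Cn n} {H : ℂ → ℝ} {K : Set ℂ} (hF : ContinuousOn F K)
    (hH : ContinuousOn H K) (ε k : ℝ) (L : Set (Cn n)) :
    ContinuousOn (barrier F H ε k) (K ×ˢ L) := by
  have hfst : MapsTo Prod.fst (K ×ˢ L) K := fun _ hp => hp.1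
  exact ((hH.comp continuousOn_fst hfst).sub (by fun_prop)).add
    (continuousOn_const.mul ((continuousOn_snd.sub (hF.comp continuousOn_fst hfst)).norm.pow 2))

lemma exists_forall_lt_barrier {F : ℂ → Cn n} {H : ℂ → ℝ} {K : Set ℂ} {L : Set (Cn n)}
    (hK : IsCompact K) (hL : IsCompact L) (hu : UpperSemicontinuousOn u L)
    (hu_top : ∀ x ∈ L, u x < ⊤) (hF : ContinuousOn F K) (hFL : MapsTo F K (interior L))
    (hH : ContinuousOn H K) {ε : ℝ} (hb : ∀ ζ ∈ frontier K, u (F ζ) < (H ζ - ε * ‖ζ‖ ^ 2 : ℝ)) :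
    ∃ k : ℝ, ∀ p ∈ (K ×ˢ L) \ interior (K ×ˢ L), u p.2 < barrier F H ε k p := by
  set T := (K ×ˢ L) \ interior (K ×ˢ L)
  have hTK : MapsTo Prod.fst T K := fun _ hp => hp.1.1
  have hTL : MapsTo Prod.snd T L := fun _ hp => hp.1.2
  refine (eventually_forall_mem_lt_add_mul (f := fun p : ℂ × Cn n => u p.2)
    ((hK.prod hL).diff isOpen_interior) (hu.comp continuousOn_snd hTL)
    (fun p hp => hu_top _ (hTL hp)) (g := fun p => H p.1 - ε * ‖p.1‖ ^ 2)
    (d := fun p => ‖p.2 - F p.1‖ ^ 2) ((hH.comp continuousOn_fst hTK).sub (by fun_prop))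
    ((continuousOn_snd.sub (hF.comp continuousOn_fst hTK)).norm.pow 2)
    (fun _ _ => by positivity) fun p hp hd => ?_).exists
  have hpF : p.2 = F p.1 := by simpa [sub_eq_zero] using hd
  have hp1 : p.1 ∈ frontier K := by
    rw [hK.isClosed.frontier_eq]
    refine ⟨hTK hp, fun hint => hp.2 ?_⟩
    rw [interior_prod_eq]
    exact ⟨hint, hpF ▸ hFL (hTK hp)⟩
  simpa only [hpF] using hb p.1 hp1

open InnerProductSpace in
lemma PSHOn.le_of_frontier_lt (hD : IsOpen D) (hu : PSHOn u D) (hu_top : ∀ x ∈ D, u x < ⊤)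
    {F : ℂ → Cn n} {H : ℂ → ℝ} {K : Set ℂ} (hK : IsCompact K) (hF : AnalyticOnNhd ℂ F K)
    (hFD : MapsTo F K D) (hH : HarmonicOnNhd H K) {ε : ℝ} (hε : 0 < ε)
    (hb : ∀ ζ ∈ frontier K, u (F ζ) < (H ζ - ε * ‖ζ‖ ^ 2 : ℝ)) :
    ∀ ζ ∈ K, u (F ζ) ≤ (H ζ - ε * ‖ζ‖ ^ 2 : ℝ) := by
  intro ζ hζ
  by_contra! hlt
  obtain ⟨L, hL, hFL, hLD⟩ := exists_compact_between (hK.image_of_continuousOn hF.continuousOn) hD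
    hFD.image_subset
  have huL : UpperSemicontinuousOn u L := hu.1.mono hLD
  have huL_top : ∀ x ∈ L, u x < ⊤ := fun x hx => hu_top x (hLD hx)
  obtain ⟨k, hk⟩ := exists_forall_lt_barrier hK hL huL huL_top hF.continuousOn
    (mapsTo_iff_image_subset.2 hFL) hH.continuousOn hb
  have hζL : (ζ, F ζ) ∈ K ×ˢ L := ⟨hζ, interior_subset (hFL (mem_image_of_mem F hζ))⟩
  obtain ⟨c, hle, p, hp, htouch⟩ := exists_touching_of_isCompact
    (f := fun p : ℂ × Cn n => u p.2) (hK.prod hL)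
    (huL.comp continuousOn_snd fun _ hp => hp.2) (fun p hp => huL_top _ hp.2)
    (continuousOn_barrier hF.continuousOn hH.continuousOn ε k L) hζL (ne_bot_of_gt hlt)
  have hc : 0 < c := by
    have := EReal.coe_lt_coe_iff.1 (hlt.trans_le (hle _ hζL))
    rw [barrier_apply_self] at this
    linarith
  have hp_int : p ∈ interior (K ×ˢ L) := by
    by_contra hp_int
    have := hk p ⟨hp, hp_int⟩
    rw [htouch, EReal.coe_lt_coe_iff] at this
    linarith
  have := hu.lt_barrier_of_eventually_le (H := fun ζ => H ζ + c) (k := k) hε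
    (hD.mem_nhds (hLD hp.2)) (hF _ hp.1) ((hH _ hp.1).add (harmonicAt_const c)) <| by
      filter_upwards [mem_interior_iff_mem_nhds.1 hp_int] with q hq
      simpa only [barrier_add_const] using hle q hq
  rw [barrier_add_const, htouch] at this
  exact lt_irrefl _ this

open InnerProductSpace in
theorem PSHOn.comp_le_of_harmonicOnNhd (hD : IsOpen D) (hu : PSHOn u D)
    (hu_top : ∀ x ∈ D, u x < ⊤) {F : ℂ → Cn n} {H : ℂ → ℝ} {K : Set ℂ} (hK : IsCompact K)
    (hF : AnalyticOnNhd ℂ F K) (hFD : MapsTo F K D) (hH : HarmonicOnNhd H K)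
    (hb : ∀ ζ ∈ frontier K, u (F ζ) ≤ H ζ) : ∀ ζ ∈ K, u (F ζ) ≤ H ζ := by
  intro ζ hζ
  obtain ⟨R, hR⟩ := hK.exists_bound_of_continuousOn (f := fun ζ : ℂ => ‖ζ‖ ^ 2) (by fun_prop)
  simp only [norm_pow, norm_norm] at hR
  have hR_pos : 0 < R + 1 := by linarith [hR ζ hζ, sq_nonneg ‖ζ‖]
  refine EReal.le_of_forall_lt_iff_le.1 fun y hy => ?_
  set s := y - H ζ
  have hs_pos : 0 < s := sub_pos.2 (EReal.coe_lt_coe_iff.1 hy)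
  set ε := s / (R + 1)
  have hε : 0 < ε := div_pos hs_pos hR_pos
  have hεR : ε * (R + 1) = s := div_mul_cancel₀ s hR_pos.ne'
  refine (hu.le_of_frontier_lt hD hu_top (H := fun ζ => H ζ + s) hK hF hFD
    (fun η hη => (hH η hη).add (harmonicAt_const s)) hε (fun η hη => ?_) ζ hζ).trans
    (EReal.coe_le_coe_iff.2 ?_)
  · refine (hb η hη).trans_lt (EReal.coe_lt_coe_iff.2 ?_)
    linarith [mul_le_mul_of_nonneg_left (hR η (hK.isClosed.frontier_subset hη)) hε.le]
  · linarith [mul_nonneg hε.le (sq_nonneg ‖ζ‖)]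

end PSH

section AnalyticDisc

open Complex (canonicalFactor)

lemma frontier_closedBall_sdiff_ball_subset {X : Type*} [PseudoMetricSpace X] (x y : X) (r s : ℝ) :
    frontier (closedBall x r \ ball y s) ⊆
      sphere x r ∪ closedBall x r ∩ sphere y s := by
  rw [sdiff_eq]
  refine (frontier_inter_subset _ _).trans (union_subset_union ?_ ?_)
  · exact inter_subset_left.trans frontier_closedBall_subset_sphere
  · rw [frontier_compl, isClosed_closedBall.closure_eq]
    exact inter_subset_inter_right _ frontier_ball_subset_sphere

lemma tendsto_log_norm_sub_add_log_norm_canonicalFactor {R : ℝ} {a : ℂ} (ha : a ∈ ball 0 R)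
    {ρ : ℝ} (hρ : ρ < 1) :
    Tendsto (fun ζ => Real.log ‖ζ - a‖ + ρ * Real.log ‖canonicalFactor R a ζ‖) (𝓝[≠] a)
      atBot := by
  set φ : ℂ → ℂ := fun ζ => (R ^ 2 - starRingEnd ℂ a * ζ) / R
  have hR : 0 < R := pos_of_mem_ball ha
  have hφ_ne : φ a ≠ 0 := by
    have : ‖a‖ ^ 2 < R ^ 2 := pow_lt_pow_left₀ (mem_ball_zero_iff.1 ha) (norm_nonneg a) two_ne_zero
    refine div_ne_zero ?_ (Complex.ofReal_ne_zero.2 hR.ne')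
    rw [Complex.conj_mul']
    exact_mod_cast (sub_pos.2 this).ne'
  have hφ_cont : ContinuousAt φ a := by fun_prop
  have hlogφ : Tendsto (fun ζ => ρ * Real.log ‖φ ζ‖) (𝓝[≠] a) (𝓝 (ρ * Real.log ‖φ a‖)) :=
    ((hφ_cont.norm.log (norm_ne_zero_iff.2 hφ_ne)).tendsto.const_mul ρ).mono_left nhdsWithin_le_nhds
  have hlog : Tendsto (fun ζ => (1 - ρ) * Real.log ‖ζ - a‖) (𝓝[≠] a) atBot :=
    (Real.tendsto_log_nhdsGT_zero.comp (tendsto_norm_sub_self_nhdsNE a)).const_mul_atBot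
      (sub_pos.2 hρ)
  refine (hlog.atBot_add hlogφ).congr' ?_
  filter_upwards [self_mem_nhdsWithin, nhdsWithin_le_nhds (hφ_cont.eventually_ne hφ_ne)]
    with ζ hζ hφζ
  have hfactor : canonicalFactor R a ζ = φ ζ / (ζ - a) := by
    rw [Complex.canonicalFactor_apply, div_div]
  have hlog_factor : Real.log ‖canonicalFactor R a ζ‖ = Real.log ‖φ ζ‖ - Real.log ‖ζ - a‖ := by
    rw [hfactor, norm_div (φ ζ), Real.log_div (norm_ne_zero_iff.2 hφζ)
      (norm_ne_zero_iff.2 (sub_ne_zero.2 hζ))]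
  rw [hlog_factor]
  ring

/-- Holomorphic discs `𝔻 → D`, the competitors in the definition of the Kobayashi metric. They are
encoded, as there, by functions on all of `ℂ`. -/
structure IsAnalyticDisc {n : ℕ} (f : ℂ → Cn n) (D : Set (Cn n)) : Prop where
  differentiableOn : DifferentiableOn ℂ f (ball 0 1)
  mapsTo : MapsTo f (ball 0 1) D

namespace IsAnalyticDisc

variable {n : ℕ} {f : ℂ → Cn n} {D : Set (Cn n)} {a ζ : ℂ} {u : Cn n → EReal} {C : ℝ}

lemma differentiableAt (hf : IsAnalyticDisc f D) (ha : a ∈ ball 0 1) : DifferentiableAt ℂ f a :=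
  hf.differentiableOn.differentiableAt (isOpen_ball.mem_nhds ha)

lemma analyticOnNhd (hf : IsAnalyticDisc f D) : AnalyticOnNhd ℂ f (ball 0 1) :=
  hf.differentiableOn.analyticOnNhd isOpen_ball

lemma eventually_ne (hf : IsAnalyticDisc f D) (ha : a ∈ ball 0 1) (hζ : ζ ∈ ball 0 1)
    (hne : f ζ ≠ f a) : ∀ᶠ η in 𝓝[≠] a, f η ≠ f a := by
  by_contra h
  rw [not_eventually] at h
  simp only [not_not] at h
  exact hne (hf.analyticOnNhd.eqOn_of_preconnected_of_frequently_eq analyticOnNhd_const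
    (convex_ball _ _).isPreconnected ha h hζ)

lemma eventually_le_log_norm_sub (hf : IsAnalyticDisc f D) (ha : a ∈ ball 0 1) (hζ : ζ ∈ ball 0 1)
    (hne : f ζ ≠ f a) (hu : ∀ᶠ x in 𝓝[D] f a, u x ≤ (Real.log ‖x - f a‖ + C : ℝ)) :
    ∃ C' : ℝ, ∀ᶠ η in 𝓝[≠] a, u (f η) ≤ (Real.log ‖η - a‖ + C' : ℝ) := by
  obtain ⟨M, hM, hbound⟩ := (hf.differentiableAt ha).isBigO_sub.exists_pos
  have hlim : Tendsto f (𝓝[≠] a) (𝓝[D] f a) := tendsto_nhdsWithin_iff.2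
    ⟨(hf.differentiableAt ha).continuousAt.tendsto.mono_left nhdsWithin_le_nhds,
      nhdsWithin_le_nhds (mem_of_superset (isOpen_ball.mem_nhds ha) hf.mapsTo)⟩
  refine ⟨Real.log M + C, ?_⟩
  filter_upwards [hlim.eventually hu, hf.eventually_ne ha hζ hne,
    nhdsWithin_le_nhds hbound.bound, self_mem_nhdsWithin] with η hη hfη hηM hηa
  refine hη.trans (EReal.coe_le_coe_iff.2 ?_)
  have hlog := Real.log_le_log (norm_pos_iff.2 (sub_ne_zero.2 hfη)) hηM
  rw [Real.log_mul hM.ne' (norm_ne_zero_iff.2 (sub_ne_zero.2 hηa))] at hlog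
  linarith

/- The factor `ρ < 1` makes the harmonic majorant dominate `log ‖η - a‖` near the pole,
whatever the additive constant. -/
lemma eventually_le_neg_mul_log_canonicalFactor (hf : IsAnalyticDisc f D) (ha : a ∈ ball 0 1)
    (hζ : ζ ∈ ball 0 1) (hne : f ζ ≠ f a)
    (hu : ∀ᶠ x in 𝓝[D] f a, u x ≤ (Real.log ‖x - f a‖ + C : ℝ)) {R ρ : ℝ} (haR : a ∈ ball 0 R)
    (hρ : ρ < 1) :
    ∀ᶠ η in 𝓝[≠] a, u (f η) ≤ (-ρ * Real.log ‖canonicalFactor R a η‖ : ℝ) := by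
  obtain ⟨C', hC'⟩ := hf.eventually_le_log_norm_sub ha hζ hne hu
  have hlim := tendsto_log_norm_sub_add_log_norm_canonicalFactor haR hρ
  filter_upwards [hC', hlim.eventually_le_atBot (-C')] with η hη hlog
  refine hη.trans (EReal.coe_le_coe_iff.2 ?_)
  linarith

open InnerProductSpace in
lemma psh_le_neg_mul_log_canonicalFactor (hf : IsAnalyticDisc f D) (hD : IsOpen D)
    (hu : PSHOn u D) (hneg : ∀ x ∈ D, u x < 0)
    (hpole : ∀ᶠ x in 𝓝[D] f a, u x ≤ (Real.log ‖x - f a‖ + C : ℝ)) {R : ℝ} (hR : R < 1)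
    (ha : a ∈ ball 0 R) (hζ : ζ ∈ ball 0 R) (hne : f ζ ≠ f a) :
    u (f ζ) ≤ (-R * Real.log ‖canonicalFactor R a ζ‖ : ℝ) := by
  have hball : closedBall (0 : ℂ) R ⊆ ball 0 1 := closedBall_subset_ball hR
  have hnear := hf.eventually_le_neg_mul_log_canonicalFactor (hball (ball_subset_closedBall ha))
    (hball (ball_subset_closedBall hζ)) hne hpole ha hR
  obtain ⟨δ₀, hδ₀, hδ₀_le⟩ := Metric.eventually_nhds_iff_ball.1 (eventually_nhdsWithin_iff.1 hnear)
  have hζa : 0 < dist ζ a := dist_pos.2 fun h => hne (h ▸ rfl)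
  obtain ⟨δ, hδ, hδ_lt⟩ := exists_between (lt_min hδ₀ hζa)
  rw [lt_min_iff] at hδ_lt
  set K := closedBall (0 : ℂ) R \ ball a δ
  have hKball : K ⊆ ball 0 1 := sdiff_subset.trans hball
  have hKa : ∀ η ∈ K, η ≠ a := fun η hη h => hη.2 (h ▸ mem_ball_self hδ)
  have hH : HarmonicOnNhd (fun η => -R * Real.log ‖canonicalFactor R a η‖) K := fun η hη =>
    ((Complex.analyticOnNhd_canonicalFactor R a η (hKa η hη)).harmonicAt_log_norm
      (Complex.canonicalFactor_ne_zero ha hη.1 (hKa η hη))).const_smul (c := -R)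
  refine hu.comp_le_of_harmonicOnNhd hD (fun x hx => (hneg x hx).trans EReal.zero_lt_top)
    ((isCompact_closedBall _ _).diff isOpen_ball)
    (hf.analyticOnNhd.mono hKball) (hf.mapsTo.mono_left hKball) hH (fun η hη => ?_) ζ
    ⟨ball_subset_closedBall hζ, fun h => (mem_ball.1 h).not_gt hδ_lt.2⟩
  rcases frontier_closedBall_sdiff_ball_subset _ _ _ _ hη with hη | hη
  · rw [Complex.norm_canonicalFactor_eval_circle_eq_one ha hη, Real.log_one, mul_zero]
    exact (hneg _ (hf.mapsTo (hball (sphere_subset_closedBall hη)))).le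
  · exact hδ₀_le η (mem_ball.2 (hη.2.trans_lt hδ_lt.1)) (ne_of_mem_sphere hη.2 hδ.ne')

theorem psh_le_neg_log_canonicalFactor (hf : IsAnalyticDisc f D) (hD : IsOpen D)
    (hu : PSHOn u D) (hneg : ∀ x ∈ D, u x < 0)
    (hpole : ∀ᶠ x in 𝓝[D] f a, u x ≤ (Real.log ‖x - f a‖ + C : ℝ))
    (ha : a ∈ ball 0 1) (hζ : ζ ∈ ball 0 1) (hne : f ζ ≠ f a) :
    u (f ζ) ≤ (-Real.log ‖canonicalFactor 1 a ζ‖ : ℝ) := by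
  have hζa : ζ ≠ a := fun h => hne (h ▸ rfl)
  have hcont : ContinuousAt (fun R : ℝ => -R * Real.log ‖canonicalFactor R a ζ‖) 1 := by
    have hfactor : ContinuousAt (fun R : ℝ => canonicalFactor R a ζ) 1 := by
      simp only [Complex.canonicalFactor_apply]
      refine ContinuousAt.div (by fun_prop) (by fun_prop) ?_
      simpa using sub_ne_zero.2 hζa
    exact continuousAt_neg.mul (hfactor.norm.log (norm_ne_zero_iff.2
      (Complex.canonicalFactor_ne_zero ha (ball_subset_closedBall hζ) hζa)))
  have hlim := (continuous_coe_real_ereal.continuousAt.comp hcont).tendsto.mono_left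
    (nhdsWithin_le_nhds (s := Iio 1))
  simp only [Function.comp_def, neg_mul, one_mul] at hlim
  refine ge_of_tendsto hlim ?_
  rw [mem_ball_zero_iff] at ha hζ
  filter_upwards [self_mem_nhdsWithin, nhdsWithin_le_nhds (lt_mem_nhds ha),
    nhdsWithin_le_nhds (lt_mem_nhds hζ)] with R hR haR hζR
  simpa using hf.psh_le_neg_mul_log_canonicalFactor hD hu hneg hpole hR
    (mem_ball_zero_iff.2 haR) (mem_ball_zero_iff.2 hζR) hne

end IsAnalyticDisc

end AnalyticDisc

section GreenFunction

variable {n : ℕ} {D : Set (Cn n)}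

lemma greenFn_le_of_forall_psh {z w : Cn n} {c : EReal}
    (h : ∀ (u : Cn n → EReal) (C : ℝ), PSHOn u D → (∀ x ∈ D, u x < 0) →
      (∀ᶠ x in 𝓝[D] z, u x ≤ (Real.log ‖x - z‖ + C : ℝ)) → u w ≤ c) :
    greenFn D z w ≤ c := by
  refine sSup_le ?_
  rintro _ ⟨u, hu, hneg, ⟨C, hpole⟩, rfl⟩
  exact h u C hu hneg hpole

lemma greenFn_nonpos (z : Cn n) {w : Cn n} (hw : w ∈ D) : greenFn D z w ≤ 0 :=
  greenFn_le_of_forall_psh fun _ _ _ hneg _ => (hneg w hw).le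

theorem IsAnalyticDisc.greenFn_le {f : ℂ → Cn n} (hf : IsAnalyticDisc f D) (hD : IsOpen D) {a : ℂ}
    (ha : a ∈ ball 0 1) (hne : f 0 ≠ f a) : greenFn D (f a) (f 0) ≤ (Real.log ‖a‖ : ℝ) := by
  have hlog : -Real.log ‖Complex.canonicalFactor 1 a 0‖ = Real.log ‖a‖ := by
    simp [Complex.canonicalFactor_apply]
  rw [← hlog]
  exact greenFn_le_of_forall_psh fun u C hu hneg hpole =>
    hf.psh_le_neg_log_canonicalFactor hD hu hneg hpole ha (mem_ball_self one_pos) hne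

lemma erexp_nonneg (x : EReal) : 0 ≤ erexp x := by
  unfold erexp
  split_ifs <;> positivity

lemma erexp_le_of_le_log {x : EReal} {c : ℝ} (hc : 0 < c) (h : x ≤ (Real.log c : ℝ)) :
    erexp x ≤ c := by
  unfold erexp
  split_ifs with hbot htop
  · exact hc.le
  · exact hc.le
  · rw [← EReal.coe_toReal htop hbot, EReal.coe_le_coe_iff] at h
    exact (Real.le_log_iff_exp_le hc).1 h

lemma erexp_greenFn_le_one (z : Cn n) {w : Cn n} (hw : w ∈ D) : erexp (greenFn D z w) ≤ 1 :=
  erexp_le_of_le_log one_pos (by simpa using greenFn_nonpos z hw)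

end GreenFunction

section Kobayashi

lemma inter_frontier_nonempty_of_isPreconnected {X : Type*} [TopologicalSpace X]
    {s U : Set X} (hs : IsPreconnected s) (hU : IsOpen U) (hsU : (s ∩ U).Nonempty)
    (hs_diff : (s \ U).Nonempty) : (s ∩ frontier U).Nonempty := by
  by_contra hempty
  rw [not_nonempty_iff_eq_empty, ← disjoint_iff_inter_eq_empty] at hempty
  have : PreconnectedSpace s := Subtype.preconnectedSpace hs
  obtain ⟨x, hxs, hxU⟩ := hsU
  obtain ⟨y, hys, hyU⟩ := hs_diff
  have huniv := (isClopen_preimage_val hU hempty.symm).eq_univ ⟨⟨x, hxs⟩, hxU⟩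
  exact hyU (huniv.ge (mem_univ ⟨y, hys⟩))

variable {n : ℕ} {D E U : Set (Cn n)} {f : ℂ → Cn n} {z X : Cn n} {α : ℂ} {m : ℝ}

lemma kobayashi_le (hf : IsAnalyticDisc f D) (α : ℂ) :
    kobayashi D (f 0) (α • deriv f 0) ≤ ‖α‖ := by
  refine csInf_le ⟨0, ?_⟩ ⟨α, rfl, f, hf.differentiableOn, hf.mapsTo, rfl, rfl⟩
  rintro _ ⟨β, rfl, -⟩
  exact norm_nonneg β

lemma exists_isAnalyticDisc (hD : D ∈ 𝓝 z) (X : Cn n) :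
    ∃ (f : ℂ → Cn n) (α : ℂ), IsAnalyticDisc f D ∧ f 0 = z ∧ α • deriv f 0 = X := by
  have hline : ∀ᶠ c : ℂ in 𝓝 0, z + c • X ∈ D :=
    ContinuousAt.eventually_mem (by fun_prop) (by simpa using hD)
  obtain ⟨r, hr, hball⟩ := Metric.eventually_nhds_iff_ball.1 hline
  have hr' : (r : ℂ) ≠ 0 := Complex.ofReal_ne_zero.2 hr.ne'
  have hderiv : HasDerivAt (fun ζ : ℂ => z + (r * ζ) • X) ((r : ℂ) • X) 0 := by
    simpa using (((hasDerivAt_id (0 : ℂ)).const_mul (r : ℂ)).smul_const X).const_add z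
  refine ⟨fun ζ => z + (r * ζ) • X, (r : ℂ)⁻¹, ⟨by fun_prop, fun ζ hζ => hball _ ?_⟩, by simp, ?_⟩
  · rw [mem_ball_zero_iff] at hζ ⊢
    rw [norm_mul, Complex.norm_of_nonneg hr.le]
    exact mul_lt_of_lt_one_right hr hζ
  · rw [hderiv.deriv, inv_smul_smul₀ hr']

lemma le_kobayashi (hD : D ∈ 𝓝 z) {c : ℝ}
    (h : ∀ (f : ℂ → Cn n) (α : ℂ), IsAnalyticDisc f D → f 0 = z → α • deriv f 0 = X → c ≤ ‖α‖) :
    c ≤ kobayashi D z X := by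
  obtain ⟨f, α, hf, hf0, hα⟩ := exists_isAnalyticDisc hD X
  refine le_csInf ⟨‖α‖, α, rfl, f, hf.differentiableOn, hf.mapsTo, hf0, hα⟩ ?_
  rintro _ ⟨β, rfl, g, hg, hgD, hg0, hβ⟩
  exact h g β ⟨hg, hgD⟩ hg0 hβ

lemma kobayashi_mul_le (hm : 0 < m) (hf : DifferentiableOn ℂ f (ball 0 m))
    (hfE : MapsTo f (ball 0 m) E) (α : ℂ) :
    kobayashi E (f 0) (α • deriv f 0) * m ≤ ‖α‖ := by
  have hm' : (m : ℂ) ≠ 0 := Complex.ofReal_ne_zero.2 hm.ne'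
  have hscale : MapsTo (fun ζ : ℂ => m * ζ) (ball 0 1) (ball 0 m) := fun ζ hζ => by
    rw [mem_ball_zero_iff] at hζ ⊢
    rw [norm_mul, Complex.norm_of_nonneg hm.le]
    exact mul_lt_of_lt_one_right hm hζ
  have hdisc : IsAnalyticDisc (fun ζ => f (m * ζ)) E :=
    ⟨hf.comp (by fun_prop) hscale, hfE.comp hscale⟩
  have hle := kobayashi_le hdisc (α / m)
  rw [deriv_comp_mul_left, mul_zero, smul_smul, div_mul_cancel₀ α hm', norm_div,
    Complex.norm_of_nonneg hm.le] at hle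
  exact (le_div_iff₀ hm).1 hle

lemma IsAnalyticDisc.mapsTo_ball_of_le_erexp_greenFn (hf : IsAnalyticDisc f D) (hD : IsOpen D)
    (hU : IsOpen U) (hfU : f 0 ∈ U) (hm : m ≤ 1)
    (hgreen : ∀ w ∈ D ∩ frontier U, m ≤ erexp (greenFn D w (f 0))) :
    MapsTo f (ball 0 m) U := by
  have hball : ball (0 : ℂ) m ⊆ ball 0 1 := ball_subset_ball hm
  by_contra! hexit
  obtain ⟨ζ, hζ, hζU⟩ := not_forall₂.1 hexit
  have hconn : IsPreconnected (f '' ball 0 m) :=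
    (convex_ball 0 m).isPreconnected.image f (hf.differentiableOn.continuousOn.mono hball)
  obtain ⟨_, ⟨a, ha, rfl⟩, hfa⟩ := inter_frontier_nonempty_of_isPreconnected hconn hU
    ⟨f 0, mem_image_of_mem f (mem_ball_self (pos_of_mem_ball hζ)), hfU⟩
    ⟨f ζ, mem_image_of_mem f hζ, hζU⟩
  have hne : f 0 ≠ f a := fun h => (disjoint_frontier_iff_isOpen.2 hU).ne_of_mem hfa hfU h.symm
  have ha0 : 0 < ‖a‖ := norm_pos_iff.2 fun h => hne (h ▸ rfl)
  refine (mem_ball_zero_iff.1 ha).not_ge ?_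
  calc m ≤ erexp (greenFn D (f a) (f 0)) := hgreen _ ⟨hf.mapsTo (hball ha), hfa⟩
    _ ≤ ‖a‖ := erexp_le_of_le_log ha0 (hf.greenFn_le hD (hball ha) hne)

end Kobayashi

theorem kobayashi_green_localization_general {n : ℕ} {D U : Set (Cn n)} (hD : IsOpen D)
    (hU : IsOpen U) (hfr : (D ∩ frontier U).Nonempty) {z : Cn n} (hz : z ∈ D ∩ U) (X : Cn n) :
    kobayashi (D ∩ U) z X * sInf ((fun w => erexp (greenFn D w z)) '' (D ∩ frontier U)) ≤
      kobayashi D z X := by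
  set S := (fun w => erexp (greenFn D w z)) '' (D ∩ frontier U)
  have hS_nonneg : ∀ x ∈ S, 0 ≤ x := forall_mem_image.2 fun _ _ => erexp_nonneg _
  have hS_le : ∀ w ∈ D ∩ frontier U, sInf S ≤ erexp (greenFn D w z) := fun w hw =>
    csInf_le ⟨0, hS_nonneg⟩ (mem_image_of_mem _ hw)
  have hS_le_one : sInf S ≤ 1 := (hS_le _ hfr.some_mem).trans (erexp_greenFn_le_one _ hz.1)
  refine le_kobayashi (hD.mem_nhds hz.1) fun f α hf hf0 hα => ?_
  subst hf0 hα
  rcases (Real.sInf_nonneg hS_nonneg).eq_or_lt with hS | hS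
  · rw [← hS, mul_zero]
    exact norm_nonneg α
  have hball : ball (0 : ℂ) (sInf S) ⊆ ball 0 1 := ball_subset_ball hS_le_one
  exact kobayashi_mul_le hS (hf.differentiableOn.mono hball) ((hf.mapsTo.mono_left hball).inter
    (hf.mapsTo_ball_of_le_erexp_greenFn hD hU hz.2 hS_le_one hS_le)) α

/-- Localization of the Kobayashi metric via the pluricomplex Green
function: `K_D(z;X) ≥ K_{D∩U}(z;X) · inf_{w ∈ D ∩ ∂U} exp(g_D(w,z))`. -/
theorem kobayashi_green_localization {n : ℕ} (D : Set (Cn n)) (hD : IsOpen D)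
    (hDconn : IsConnected D) (U : Set (Cn n)) (hU : IsOpen U)
    (hDU : (D ∩ U).Nonempty) (hDnU : (D \ U).Nonempty) :
    ∀ z ∈ D ∩ U, ∀ X : Cn n,
      kobayashi D z X ≥
        kobayashi (D ∩ U) z X * sInf ((fun w => erexp (greenFn D w z)) '' (D ∩ frontier U)) := by
  intro z hz X
  exact kobayashi_green_localization_general hD hU
    (inter_frontier_nonempty_of_isPreconnected hDconn.isPreconnected hU hDU hDnU) hz X
end
end

section
/- Let D be a bounded hyperconvex domain in ℂⁿ with negative psh exhaustion function φ (that is, φ is psh on D, φ < 0, and φ(z) → 0 as z → ∂D). Then for any compact set K ⊂ D and any compact set L ⊂ ℂⁿ disjoint from K there exists a constant m > 0 such that g_D(z,w) ≥ m φ(w) for all z ∈ K and w ∈ D ∩ L. -/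
open Set Metric Filter Topology
open scoped Classical

noncomputable section

/-!
For `z ∈ K` the functions `log (‖x - z‖ / R)` and `m φ` are negative and plurisubharmonic on `D`.
If `m` is large, the first dominates the second on a shell around `z`, so using it alone near `z`
and the maximum of the two elsewhere defines a competitor for the Green function that is at least
`m φ` away from `z`. By compactness of `K` the same `m` serves all poles.

The glued function is plurisubharmonic because plurisubharmonicity is local. On a disc, one
approximates a continuous majorant on the circle by the real part of a polynomial, subtracts this
harmonic function, and applies the maximum principle, which only uses small circles.
-/

section CircleSubmean

open InnerProductSpace Real

/-- The sub-mean value inequality for `v : ℂ → [-∞, ∞)` on the circle of centre `c` and radius `r`.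
As in `PSHOn`, the possibly divergent average of `v` over the circle is replaced by the averages of
all its continuous majorants. -/
def CircleSubmean (v : ℂ → EReal) (c : ℂ) (r : ℝ) : Prop :=
  ∀ g : ℂ → ℝ, ContinuousOn g (sphere c |r|) → (∀ ζ ∈ sphere c |r|, v ζ ≤ g ζ) →
    v c ≤ (circleAverage g c r : ℝ)

/-- The local sub-mean value property at `c`: the sub-mean value inequality holds on all
sufficiently small circles around `c`. -/
def LocalSubmean (v : ℂ → EReal) (c : ℂ) : Prop :=
  ∀ᶠ r in 𝓝[>] (0 : ℝ), CircleSubmean v c r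

variable {v w : ℂ → EReal} {c : ℂ} {r : ℝ}

lemma ereal_sub_coe_le_coe_iff {x : EReal} {y z : ℝ} : x - y ≤ z ↔ x ≤ ((z + y : ℝ) : EReal) := by
  rw [EReal.sub_le_iff_le_add (.inl (EReal.coe_ne_bot y)) (.inl (EReal.coe_ne_top y)),
    EReal.coe_add]

lemma upperSemicontinuousOn_sub_coe {X : Type*} [TopologicalSpace X] {u : X → EReal} {h : X → ℝ}
    {s : Set X} (hu : UpperSemicontinuousOn u s) (hh : ContinuousOn h s) :
    UpperSemicontinuousOn (fun x => u x - h x) s := by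
  have hneg : UpperSemicontinuousOn (fun x => ((-h x : ℝ) : EReal)) s :=
    (continuous_coe_real_ereal.comp_continuousOn hh.neg).upperSemicontinuousOn
  exact UpperSemicontinuousOn.add' hu hneg fun x _ =>
    EReal.continuousAt_add (.inr (EReal.coe_ne_bot _)) (.inr (EReal.coe_ne_top _))

lemma eventually_closedBall_abs_subset {U : Set ℂ} (hU : U ∈ 𝓝 c) :
    ∀ᶠ r in 𝓝[>] (0 : ℝ), closedBall c |r| ⊆ U := by
  have habs : Tendsto (fun r : ℝ => |r|) (𝓝[>] 0) (𝓝 0) :=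
    (continuous_abs.tendsto' 0 0 abs_zero).mono_left nhdsWithin_le_nhds
  exact habs.eventually (eventually_closedBall_subset hU)

lemma CircleSubmean.sup (hv : CircleSubmean v c r) (hw : CircleSubmean w c r) :
    CircleSubmean (fun ζ => v ζ ⊔ w ζ) c r := fun g hg hle =>
  sup_le (hv g hg fun ζ hζ => le_sup_left.trans (hle ζ hζ))
    (hw g hg fun ζ hζ => le_sup_right.trans (hle ζ hζ))

lemma CircleSubmean.const_mul (hv : CircleSubmean v c r) {m : ℝ} (hm : 0 < m) :
    CircleSubmean (fun ζ => (m : EReal) * v ζ) c r := by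
  have hm' : (0 : EReal) < m := by exact_mod_cast hm
  have mul_le_iff (x : EReal) (y : ℝ) : (m : EReal) * x ≤ y ↔ x ≤ ((m⁻¹ * y : ℝ) : EReal) := by
    rw [mul_comm, ← EReal.le_div_iff_mul_le hm' (EReal.coe_ne_top m), ← EReal.coe_div,
      div_eq_inv_mul]
  intro g hg hle
  have hmean := hv (fun ζ => m⁻¹ * g ζ) (hg.const_mul _)
    fun ζ hζ => (mul_le_iff _ _).1 (hle ζ hζ)
  rw [mul_le_iff]
  simpa only [← smul_eq_mul, circleAverage_fun_smul] using hmean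

lemma CircleSubmean.sub_harmonic (hv : CircleSubmean v c r) {h : ℂ → ℝ}
    (hh : HarmonicOnNhd h (closedBall c |r|)) :
    CircleSubmean (fun ζ => v ζ - h ζ) c r := by
  intro g hg hle
  have hhc : ContinuousOn h (sphere c |r|) := hh.continuousOn.mono sphere_subset_closedBall
  have hmean := hv (fun ζ => g ζ + h ζ) (hg.add hhc)
    fun ζ hζ => ereal_sub_coe_le_coe_iff.1 (hle ζ hζ)
  rwa [circleAverage_fun_add hg.circleIntegrable' hhc.circleIntegrable', hh.circleAverage_eq,
    ← ereal_sub_coe_le_coe_iff] at hmean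

lemma CircleSubmean.of_harmonic_minorant {h : ℂ → ℝ} (hh : HarmonicOnNhd h (closedBall c |r|))
    (hle : ∀ ζ ∈ sphere c |r|, h ζ ≤ v ζ) (hc : v c ≤ h c) : CircleSubmean v c r := by
  intro g hg hvg
  have hhc : ContinuousOn h (sphere c |r|) := hh.continuousOn.mono sphere_subset_closedBall
  have hmean : h c ≤ circleAverage g c r := by
    rw [← hh.circleAverage_eq]
    exact circleAverage_mono hhc.circleIntegrable' hg.circleIntegrable'
      fun ζ hζ => EReal.coe_le_coe_iff.1 ((hle ζ hζ).trans (hvg ζ hζ))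
  exact hc.trans (EReal.coe_le_coe_iff.2 hmean)

lemma circleAverage_lt_of_le_of_exists_lt {g : ℂ → ℝ} (hg : ContinuousOn g (sphere c |r|)) {M : ℝ}
    (hle : ∀ ζ ∈ sphere c |r|, g ζ ≤ M) (hlt : ∃ ζ ∈ sphere c |r|, g ζ < M) :
    circleAverage g c r < M := by
  obtain ⟨ζ₀, hζ₀, hζ₀M⟩ := hlt
  rw [← image_circleMap_Ioc] at hζ₀
  obtain ⟨θ₀, hθ₀, rfl⟩ := hζ₀
  have hcont : Continuous fun θ => g (circleMap c r θ) :=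
    hg.comp_continuous (continuous_circleMap c r) (circleMap_mem_sphere' c r)
  have hint := intervalIntegral.integral_lt_integral_of_continuousOn_of_le_of_exists_lt
    two_pi_pos hcont.continuousOn continuousOn_const
    (fun θ _ => hle _ (circleMap_mem_sphere' c r θ)) ⟨θ₀, Ioc_subset_Icc_self hθ₀, hζ₀M⟩
  calc circleAverage g c r < circleAverage (fun _ => M) c r :=
        mul_lt_mul_of_pos_left hint (inv_pos.2 two_pi_pos)
    _ = M := circleAverage_const M c r

lemma CircleSubmean.lt_of_exists_lt (hv : CircleSubmean v c r)
    (husc : UpperSemicontinuousOn v (sphere c |r|)) {M : ℝ}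
    (hle : ∀ ζ ∈ sphere c |r|, v ζ ≤ M) (hlt : ∃ ζ ∈ sphere c |r|, v ζ < M) : v c < M := by
  obtain ⟨ζ₀, hζ₀, hζ₀M⟩ := hlt
  obtain ⟨M', hζ₀M', hM'⟩ := EReal.lt_iff_exists_real_btwn.1 hζ₀M
  replace hM' : M' < M := EReal.coe_lt_coe_iff.1 hM'
  obtain ⟨U, hU, hζ₀U, hvU⟩ := mem_nhdsWithin.1 (husc ζ₀ hζ₀ M' hζ₀M')
  obtain ⟨f, hf0, hf1, hf⟩ := exists_continuous_zero_one_of_isClosed hU.isClosed_compl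
    isClosed_singleton (disjoint_singleton_right.2 (not_not.2 hζ₀U))
  -- `g` interpolates between the bound `M'` near `ζ₀` and the bound `M` elsewhere.
  set g : ℂ → ℝ := fun ζ => M - (M - M') * f ζ with hg
  have hgc : ContinuousOn g (sphere c |r|) := by fun_prop
  have hgM' (ζ : ℂ) : M' ≤ g ζ := by nlinarith [(hf ζ).2]
  have hgM (ζ : ℂ) : g ζ ≤ M := by nlinarith [(hf ζ).1]
  have hvg (ζ : ℂ) (hζ : ζ ∈ sphere c |r|) : v ζ ≤ g ζ := by
    by_cases hζU : ζ ∈ U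
    · exact (hvU ⟨hζU, hζ⟩).le.trans (EReal.coe_le_coe_iff.2 (hgM' ζ))
    · simpa [hg, hf0 hζU] using hle ζ hζ
  have hgζ₀ : g ζ₀ < M := by simpa [hg, hf1 (mem_singleton ζ₀)] using hM'
  exact (hv g hgc hvg).trans_lt (EReal.coe_lt_coe_iff.2
    (circleAverage_lt_of_le_of_exists_lt hgc (fun ζ _ => hgM ζ) ⟨ζ₀, hζ₀, hgζ₀⟩))

lemma LocalSubmean.sub_harmonic (hv : LocalSubmean v c) {h : ℂ → ℝ} (hh : HarmonicAt h c) :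
    LocalSubmean (fun ζ => v ζ - h ζ) c := by
  filter_upwards [hv, eventually_closedBall_abs_subset hh.eventually] with r hr hball
  exact hr.sub_harmonic hball

lemma LocalSubmean.of_harmonic_minorant {h : ℂ → ℝ} (hh : HarmonicAt h c)
    (hle : ∀ᶠ ζ in 𝓝 c, h ζ ≤ v ζ) (hc : v c ≤ h c) : LocalSubmean v c := by
  filter_upwards [eventually_closedBall_abs_subset (hh.eventually.and hle)] with r hball
  exact .of_harmonic_minorant (fun ζ hζ => (hball hζ).1)
    (fun ζ hζ => (hball (sphere_subset_closedBall hζ)).2) hc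

lemma localSubmean_log_enorm {E : Type*} [NormedAddCommGroup E] [NormedSpace ℂ E] {f : ℂ → E}
    (hf : AnalyticAt ℂ f c) : LocalSubmean (fun ζ => ENNReal.log ‖f ζ‖ₑ) c := by
  by_cases hfc : f c = 0
  · exact .of_forall fun r g _ _ => by simp [hfc]
  -- A norming functional `l` of `f c` gives the harmonic minorant `log |l ∘ f|`, exact at `c`.
  obtain ⟨l, hl, hlfc⟩ := exists_dual_vector ℂ (f c) (norm_ne_zero_iff.2 hfc)
  have hlf : AnalyticAt ℂ (fun ζ => l (f ζ)) c := (l.analyticAt _).comp hf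
  have hlfc0 : l (f c) ≠ 0 := by simpa [hlfc] using hfc
  have log_enorm {x : E} (hx : x ≠ 0) : ENNReal.log ‖x‖ₑ = (log ‖x‖ : ℝ) := by
    rw [← ofReal_norm, ENNReal.log_ofReal_of_pos (norm_pos_iff.2 hx)]
  refine .of_harmonic_minorant (hlf.harmonicAt_log_norm hlfc0) ?_ ?_
  · filter_upwards [hlf.continuousAt.eventually_ne hlfc0] with ζ hζ
    have hfζ : f ζ ≠ 0 := fun h => hζ (by simp [h])
    rw [log_enorm hfζ, EReal.coe_le_coe_iff]
    refine log_le_log (norm_pos_iff.2 hζ) ?_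
    simpa [hl] using l.le_opNorm (f ζ)
  · simp [log_enorm hfc, hlfc]

theorem le_of_localSubmean_of_forall_mem_frontier_le {K : Set ℂ} (hK : IsCompact K)
    (husc : UpperSemicontinuousOn v K) (htop : ∀ ζ ∈ K, v ζ < ⊤)
    (hloc : ∀ ζ ∈ interior K, LocalSubmean v ζ) {M : ℝ} (hM : ∀ ζ ∈ frontier K, v ζ ≤ M) :
    ∀ ζ ∈ K, v ζ ≤ M := by
  by_contra! ⟨ζ₁, hζ₁, hMζ₁⟩
  obtain ⟨ζ₂, hζ₂, hmax⟩ := husc.exists_isMaxOn ⟨ζ₁, hζ₁⟩ hK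
  have hMζ₂ : M < v ζ₂ := hMζ₁.trans_le (hmax hζ₁)
  obtain ⟨S, hS⟩ : ∃ S : ℝ, (S : EReal) = v ζ₂ :=
    ⟨_, EReal.coe_toReal (htop ζ₂ hζ₂).ne (bot_lt_of_lt hMζ₂).ne'⟩
  have hvS (ζ : ℂ) (hζ : ζ ∈ K) : v ζ ≤ S := hS ▸ hmax hζ
  -- Small circles around the rightmost maximum point `p` contain the point `p + r`, which is
  -- not a maximum point.
  obtain ⟨p, ⟨hpK, hpS⟩, hright⟩ := (husc.isCompact_inter_preimage_Ici hK S).exists_isMaxOn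
    ⟨ζ₂, hζ₂, hS.le⟩ Complex.continuous_re.continuousOn
  have hp : p ∈ interior K := by
    by_contra hp
    have hpfr : p ∈ frontier K := ⟨subset_closure hpK, hp⟩
    exact (hMζ₂.trans_le (hS ▸ hpS)).not_ge (hM p hpfr)
  obtain ⟨r, ⟨hsub, hball⟩, hr⟩ := ((hloc p hp).and (eventually_closedBall_abs_subset
    (mem_interior_iff_mem_nhds.1 hp)) |>.and self_mem_nhdsWithin).exists
  have hsphere : sphere p |r| ⊆ K := sphere_subset_closedBall.trans hball
  have hpr : p + r ∈ sphere p |r| := by simp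
  have hlt : v (p + r) < S := by
    by_contra! hSpr
    have : p.re + r ≤ p.re := by simpa using hright ⟨hsphere hpr, hSpr⟩
    exact (lt_add_of_pos_right p.re hr).not_ge this
  exact (hsub.lt_of_exists_lt (husc.mono hsphere) (fun ζ hζ => hvS ζ (hsphere hζ))
    ⟨p + r, hpr, hlt⟩).not_ge hpS

lemma exists_polynomial_re_eq_of_mem_span_fourier {T : ℝ} {f : C(AddCircle T, ℂ)}
    (hf : f ∈ Submodule.span ℂ (range (fourier (T := T)))) (a : ℂ) :
    ∃ Q : Polynomial ℂ, ∀ x : AddCircle T, (a * f x).re = (Q.eval (x.toCircle : ℂ)).re := by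
  induction hf using Submodule.span_induction generalizing a with
  | mem f hf =>
    obtain ⟨n, rfl⟩ := hf
    obtain ⟨k, rfl | rfl⟩ := n.eq_nat_or_neg
    · exact ⟨.C a * .X ^ k, fun x => by simp [AddCircle.toCircle_nsmul]⟩
    · refine ⟨.C (starRingEnd ℂ a) * .X ^ k, fun x => ?_⟩
      rw [fourier_neg, ← Complex.conj_re]
      simp [AddCircle.toCircle_nsmul, -Complex.mul_re]
  | zero => exact ⟨0, by simp⟩
  | add f₁ f₂ _ _ h₁ h₂ =>
    obtain ⟨Q₁, hQ₁⟩ := h₁ a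
    obtain ⟨Q₂, hQ₂⟩ := h₂ a
    exact ⟨Q₁ + Q₂, fun x => by simp [mul_add, hQ₁, hQ₂, -Complex.mul_re]⟩
  | smul b f _ h =>
    obtain ⟨Q, hQ⟩ := h (a * b)
    exact ⟨Q, fun x => by rw [← hQ, ContinuousMap.smul_apply, smul_eq_mul, mul_assoc]⟩

lemma exists_harmonicOnNhd_abs_sub_lt {g : ℂ → ℝ} (hr : r ≠ 0)
    (hg : ContinuousOn g (sphere c |r|)) {ε : ℝ} (hε : 0 < ε) :
    ∃ h : ℂ → ℝ, HarmonicOnNhd h univ ∧ ∀ ζ ∈ sphere c |r|, |g ζ - h ζ| < ε := by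
  have hmem (x : UnitAddCircle) : c + r * x.toCircle ∈ sphere c |r| := by
    rw [mem_sphere, dist_self_add_left, norm_mul, Circle.norm_coe, mul_one, Complex.norm_real,
      norm_eq_abs]
  let F : C(UnitAddCircle, ℂ) := ⟨fun x => g (c + r * x.toCircle), by
    have := AddCircle.continuous_toCircle (T := (1 : ℝ))
    exact Complex.continuous_ofReal.comp (hg.comp_continuous (by fun_prop) hmem)⟩
  have hF : F ∈ (Submodule.span ℂ (range (fourier (T := 1)))).topologicalClosure :=
    span_fourier_closure_eq_top (T := 1) ▸ Submodule.mem_top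
  obtain ⟨P, hP, hFP⟩ := Metric.mem_closure_iff.1 hF ε hε
  obtain ⟨Q, hQ⟩ := exists_polynomial_re_eq_of_mem_span_fourier hP 1
  refine ⟨fun ζ => (Q.eval ((ζ - c) / r)).re, fun ζ _ => ?_, fun ζ hζ => ?_⟩
  · have hdiff : Differentiable ℂ fun ζ : ℂ => Q.eval ((ζ - c) / r) :=
      Q.differentiable.comp (by fun_prop)
    exact (hdiff.analyticAt ζ).harmonicAt_re
  · have hr' : (r : ℂ) ≠ 0 := Complex.ofReal_ne_zero.2 hr
    have hunit : (ζ - c) / r ∈ Submonoid.unitSphere ℂ := by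
      simpa [Submonoid.unitSphere, ← dist_eq_norm, div_eq_one_iff_eq, hr] using hζ
    obtain ⟨x, hx⟩ := (AddCircle.homeomorphCircle one_ne_zero).surjective ⟨_, hunit⟩
    have hxζ : (x.toCircle : ℂ) = (ζ - c) / r := by
      rw [← AddCircle.homeomorphCircle_apply one_ne_zero, hx]
    have hFx : F x = g ζ := by
      simp [F, hxζ, mul_div_cancel₀ _ hr']
    calc |g ζ - (Q.eval ((ζ - c) / r)).re| = |(F x - P x).re| := by
          rw [Complex.sub_re, hFx, Complex.ofReal_re, ← hxζ, ← hQ, one_mul]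
      _ ≤ dist (F x) (P x) := by rw [dist_eq_norm]; exact Complex.abs_re_le_norm _
      _ ≤ dist F P := ContinuousMap.dist_apply_le_dist x
      _ < ε := hFP

theorem circleSubmean_of_localSubmean (hr : 0 < r)
    (husc : UpperSemicontinuousOn v (closedBall c r)) (htop : ∀ ζ ∈ closedBall c r, v ζ < ⊤)
    (hloc : ∀ ζ ∈ ball c r, LocalSubmean v ζ) : CircleSubmean v c r := by
  intro g hg hvg
  refine EReal.le_of_forall_lt_iff_le.1 fun y hy => ?_
  replace hy : circleAverage g c r < y := EReal.coe_lt_coe_iff.1 hy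
  obtain ⟨h, hh, hgh⟩ := exists_harmonicOnNhd_abs_sub_lt hr.ne' hg (half_pos (sub_pos.2 hy))
  set ε := (y - circleAverage g c r) / 2 with hε
  have hhc : Continuous h := continuousOn_univ.1 hh.continuousOn
  have hvh : v c - h c ≤ ε := by
    refine le_of_localSubmean_of_forall_mem_frontier_le (v := fun ζ => v ζ - h ζ)
      (isCompact_closedBall c r) (upperSemicontinuousOn_sub_coe husc hhc.continuousOn)
      ?_ ?_ ?_ c (mem_closedBall_self hr.le)
    · exact fun ζ hζ => EReal.add_lt_top (htop ζ hζ).ne (EReal.coe_ne_top (-h ζ))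
    · rw [interior_closedBall c hr.ne']
      exact fun ζ hζ => (hloc ζ hζ).sub_harmonic (hh ζ (mem_univ ζ))
    · rw [frontier_closedBall c hr.ne', ← abs_of_pos hr]
      refine fun ζ hζ => ereal_sub_coe_le_coe_iff.2 ((hvg ζ hζ).trans (EReal.coe_le_coe_iff.2 ?_))
      linarith [le_of_abs_le (hgh ζ hζ).le]
  have hmean : h c ≤ circleAverage g c r + ε := by
    calc h c = circleAverage h c r :=
          ((hh.mono (subset_univ (closedBall c |r|))).circleAverage_eq).symm
      _ ≤ circleAverage (fun ζ => g ζ + ε) c r := by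
          refine circleAverage_mono hhc.continuousOn.circleIntegrable'
            (hg.add continuousOn_const).circleIntegrable' fun ζ hζ => ?_
          linarith [neg_le_of_abs_le (hgh ζ hζ).le]
      _ = circleAverage g c r + ε := by
          rw [circleAverage_fun_add hg.circleIntegrable' (circleIntegrable_const ε c r),
            circleAverage_const]
  refine (ereal_sub_coe_le_coe_iff.1 hvh).trans (EReal.coe_le_coe_iff.2 ?_)
  linarith

end CircleSubmean

section Periodization

open Real

lemma integral_one_sub_div_pow {T : ℝ} (hT : T ≠ 0) (N : ℕ) :
    ∫ θ in (0 : ℝ)..T, (1 - θ / T) ^ N = T / (N + 1) := by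
  rw [intervalIntegral.integral_comp_sub_div (fun x => x ^ N) hT, integral_pow]
  simp [hT, div_eq_mul_inv]

-- Adding `(1 - θ / T) ^ (N + 1) * (g (θ + T) - g θ)` changes the value at `0` to `g T`, at an
-- integral cost of order `1 / N`.
lemma exists_continuous_eq_endpoints_integral_le {g : ℝ → ℝ} (hg : Continuous g) {T ε : ℝ}
    (hT : 0 < T) (hε : 0 < ε) :
    ∃ G : ℝ → ℝ, Continuous G ∧ G 0 = G T ∧ (∀ θ ∈ Icc 0 T, min (g θ) (g (θ + T)) ≤ G θ) ∧
      ∫ θ in (0 : ℝ)..T, G θ ≤ (∫ θ in (0 : ℝ)..T, g θ) + ε := by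
  obtain ⟨M, hM⟩ := isCompact_Icc.exists_bound_of_continuousOn (s := Icc 0 T)
    (f := fun θ => g (θ + T) - g θ) (by fun_prop)
  obtain ⟨N, hN⟩ := exists_nat_gt (M * T / ε)
  set χ : ℝ → ℝ := fun θ => (1 - θ / T) ^ (N + 1) with hχ
  have hχ01 (θ : ℝ) (hθ : θ ∈ Icc 0 T) : 0 ≤ χ θ ∧ χ θ ≤ 1 := by
    have h0 : 0 ≤ 1 - θ / T := sub_nonneg.2 ((div_le_one hT).2 hθ.2)
    exact ⟨pow_nonneg h0 _, pow_le_one₀ h0 (sub_le_self 1 (div_nonneg hθ.1 hT.le))⟩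
  have hχint : ∫ θ in (0 : ℝ)..T, χ θ = T / (N + 2) := by
    rw [integral_one_sub_div_pow hT.ne']
    push_cast
    ring
  have hcost : M * (T / (N + 2)) ≤ ε := by
    rw [div_lt_iff₀ hε] at hN
    rw [← mul_div_assoc, div_le_iff₀ (by positivity)]
    linarith
  refine ⟨fun θ => g θ + χ θ * (g (θ + T) - g θ), by fun_prop, by simp [hχ, hT.ne'],
    fun θ hθ => ?_, ?_⟩
  · obtain ⟨h0, h1⟩ := hχ01 θ hθ
    have hmin := Convex.min_le_combo (g θ) (g (θ + T)) (sub_nonneg.2 h1) h0 (sub_add_cancel 1 (χ θ))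
    simp only [smul_eq_mul] at hmin
    linarith
  · calc ∫ θ in (0 : ℝ)..T, g θ + χ θ * (g (θ + T) - g θ)
        ≤ ∫ θ in (0 : ℝ)..T, g θ + M * χ θ := by
          refine intervalIntegral.integral_mono_on hT.le
            (Continuous.intervalIntegrable (by fun_prop) _ _)
            (Continuous.intervalIntegrable (by fun_prop) _ _) fun θ hθ => ?_
          rw [mul_comm M]
          gcongr
          exacts [(hχ01 θ hθ).1, (le_abs_self _).trans (hM θ hθ)]
      _ = (∫ θ in (0 : ℝ)..T, g θ) + M * (T / (N + 2)) := by
          rw [intervalIntegral.integral_add (hg.intervalIntegrable _ _)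
            (Continuous.intervalIntegrable (by fun_prop) _ _),
            intervalIntegral.integral_const_mul, hχint]
      _ ≤ (∫ θ in (0 : ℝ)..T, g θ) + ε := add_le_add_right hcost _

lemma exists_continuousOn_sphere_circleMap_eq {G : ℝ → ℝ} (hG : ContinuousOn G (Icc 0 (2 * π)))
    (hG0 : G 0 = G (2 * π)) (c : ℂ) {r : ℝ} (hr : 0 < r) :
    ∃ g : ℂ → ℝ, ContinuousOn g (sphere c r) ∧
      ∀ θ ∈ Icc 0 (2 * π), g (circleMap c r θ) = G θ := by
  have : Fact (0 < 2 * π) := ⟨two_pi_pos⟩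
  refine ⟨fun ζ => AddCircle.liftIco (2 * π) 0 G ((ζ - c).arg : Angle), fun ζ hζ => ?_,
    fun θ hθ => ?_⟩
  · have hζc : ζ - c ≠ 0 := sub_ne_zero.2 (ne_of_mem_sphere hζ hr.ne')
    have harg : ContinuousAt (fun ζ => ((ζ - c).arg : Angle)) ζ :=
      (Complex.continuousAt_arg_coe_angle hζc).comp (f := fun ζ => ζ - c) (by fun_prop)
    exact ((AddCircle.liftIco_zero_continuous hG0 hG).continuousAt.comp harg).continuousWithinAt
  · have harg : ((circleMap c r θ - c).arg : Angle) = θ := by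
      rw [circleMap_sub_center, circleMap_zero, Complex.exp_mul_I, ← Complex.ofReal_cos,
        ← Complex.ofReal_sin]
      exact Complex.arg_mul_cos_add_sin_mul_I_coe_angle hr θ
    simp only [harg]
    rcases hθ.2.lt_or_eq with hlt | rfl
    · exact AddCircle.liftIco_zero_coe_apply ⟨hθ.1, hlt⟩
    · rw [Angle.coe_two_pi, ← hG0]
      exact AddCircle.liftIco_zero_coe_apply (left_mem_Ico.2 two_pi_pos)

lemma CircleSubmean.le_intervalIntegral {v : ℂ → EReal} {c : ℂ} {r : ℝ} (hv : CircleSubmean v c r)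
    (hr : 0 < r) {g : ℝ → ℝ} (hg : Continuous g) (hle : ∀ θ, v (circleMap c r θ) ≤ g θ) :
    v c ≤ ((1 / (2 * π) * ∫ θ in (0 : ℝ)..2 * π, g θ : ℝ) : EReal) := by
  refine EReal.le_of_forall_lt_iff_le.1 fun y hy => ?_
  replace hy : 1 / (2 * π) * ∫ θ in (0 : ℝ)..2 * π, g θ < y := EReal.coe_lt_coe_iff.1 hy
  rw [one_div_mul_eq_div, div_lt_iff₀' two_pi_pos] at hy
  obtain ⟨G, hG, hG0, hgG, hint⟩ :=
    exists_continuous_eq_endpoints_integral_le hg two_pi_pos (sub_pos.2 hy)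
  rw [add_sub_cancel] at hint
  obtain ⟨f, hf, hfG⟩ := exists_continuousOn_sphere_circleMap_eq hG.continuousOn hG0 c hr
  rw [← abs_of_pos hr] at hf
  have hvf : ∀ ζ ∈ sphere c |r|, v ζ ≤ f ζ := by
    rw [← image_circleMap_Ioc]
    rintro _ ⟨θ, hθ, rfl⟩
    have hθ' : θ ∈ Icc 0 (2 * π) := Ioc_subset_Icc_self hθ
    have hper : v (circleMap c r θ) ≤ g (θ + 2 * π) := by
      simpa only [periodic_circleMap c r θ] using hle (θ + 2 * π)
    calc v (circleMap c r θ) ≤ (min (g θ) (g (θ + 2 * π)) : ℝ) := by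
          rw [EReal.coe_strictMono.monotone.map_min]
          exact le_min (hle θ) hper
      _ ≤ f (circleMap c r θ) := EReal.coe_le_coe_iff.2 (hfG θ hθ' ▸ hgG θ hθ')
  have havg : circleAverage f c r ≤ y := by
    rw [circleAverage, smul_eq_mul, inv_mul_le_iff₀ two_pi_pos]
    refine le_of_eq_of_le (intervalIntegral.integral_congr fun θ hθ => hfG θ ?_) hint
    rwa [uIcc_of_le two_pi_pos.le] at hθ
  exact (hv f hf hvf).trans (EReal.coe_le_coe_iff.2 havg)

end Periodization

section Plurisubharmonic

variable {n : ℕ} {u v : Cn n → EReal} {D U V : Set (Cn n)}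

lemma pshOn_iff_circleSubmean :
    PSHOn u D ↔ UpperSemicontinuousOn u D ∧ ∀ (a b : Cn n) (c : ℂ) (r : ℝ), 0 < r →
      (∀ ζ ∈ closedBall c r, a + ζ • b ∈ D) → CircleSubmean (fun ζ => u (a + ζ • b)) c r := by
  refine and_congr_right fun _ => ⟨fun hu a b c r hr hdisc g hg hle => ?_,
    fun hu a _ b r hr hdisc g hg hle => ?_⟩
  · have hdisc' (t : ℂ) (ht : ‖t‖ ≤ r) : a + c • b + t • b ∈ D := by
      rw [add_assoc, ← add_smul]
      exact hdisc _ (by simpa using ht)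
    have hmean := hu (a + c • b) (hdisc c (mem_closedBall_self hr.le)) b r hr hdisc'
      (fun θ => g (circleMap c r θ))
      (hg.comp_continuous (continuous_circleMap c r) (circleMap_mem_sphere' c r)) fun θ => by
        rw [add_assoc, ← add_smul]
        exact hle _ (circleMap_mem_sphere' c r θ)
    rwa [one_div] at hmean
  · have hsub := hu a b 0 r hr fun ζ hζ => hdisc ζ (mem_closedBall_zero_iff.1 hζ)
    have hmean := hsub.le_intervalIntegral hr hg fun θ => by
      simpa only [circleMap_zero] using hle θ
    simpa only [zero_smul, add_zero] using hmean

lemma PSHOn.mono (hu : PSHOn u V) (hUV : U ⊆ V) : PSHOn u U :=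
  ⟨hu.1.mono hUV, fun a ha b r hr hdisc => hu.2 a (hUV ha) b r hr fun t ht => hUV (hdisc t ht)⟩

lemma PSHOn.congr (hu : PSHOn u D) (huv : EqOn v u D) : PSHOn v D := by
  refine ⟨fun x hx => UpperSemicontinuousWithinAt.congr_of_eventuallyEq (hu.1 x hx) hx
    huv.symm.eventuallyEq_nhdsWithin, fun a ha b r hr hdisc g hg hle => ?_⟩
  rw [huv ha]
  refine hu.2 a ha b r hr hdisc g hg fun θ => ?_
  have hθ : ‖(r : ℂ) * Complex.exp (θ * Complex.I)‖ ≤ r := by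
    rw [norm_mul, Complex.norm_exp_ofReal_mul_I, mul_one, Complex.norm_real,
      Real.norm_of_nonneg hr.le]
  exact huv (hdisc _ hθ) ▸ hle θ

lemma PSHOn.sup (hu : PSHOn u D) (hv : PSHOn v D) : PSHOn (fun x => u x ⊔ v x) D := by
  rw [pshOn_iff_circleSubmean] at hu hv ⊢
  exact ⟨hu.1.sup hv.1, fun a b c r hr hdisc =>
    (hu.2 a b c r hr hdisc).sup (hv.2 a b c r hr hdisc)⟩

lemma PSHOn.const_mul (hu : PSHOn u D) {m : ℝ} (hm : 0 < m) :
    PSHOn (fun x => (m : EReal) * u x) D := by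
  rw [pshOn_iff_circleSubmean] at hu ⊢
  have hm' : (0 : EReal) < m := EReal.coe_pos.2 hm
  have hcont : Continuous fun x : EReal => (m : EReal) * x :=
    continuous_iff_continuousAt.2 fun x => (EReal.continuousAt_mul (p := (m, x))
      (.inl hm'.ne') (.inl hm'.ne') (.inl (EReal.coe_ne_bot m)) (.inl (EReal.coe_ne_top m))).comp
      (f := fun x : EReal => ((m : EReal), x)) (by fun_prop)
  exact ⟨hcont.comp_upperSemicontinuousOn hu.1 fun x y hxy => mul_le_mul_of_nonneg_left hxy hm'.le,
    fun a b c r hr hdisc => (hu.2 a b c r hr hdisc).const_mul hm⟩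

lemma PSHOn.localSubmean (hu : PSHOn u D) (hD : IsOpen D) {a b : Cn n} {c : ℂ}
    (hc : a + c • b ∈ D) : LocalSubmean (fun ζ => u (a + ζ • b)) c := by
  have hline : Continuous fun ζ : ℂ => a + ζ • b := by fun_prop
  filter_upwards [eventually_closedBall_abs_subset ((hD.preimage hline).mem_nhds hc),
    self_mem_nhdsWithin] with r hball hr
  rw [abs_of_pos hr] at hball
  exact (pshOn_iff_circleSubmean.1 hu).2 a b c r hr fun ζ hζ => hball hζ

lemma pshOn_of_localSubmean (husc : UpperSemicontinuousOn u D) (htop : ∀ x ∈ D, u x < ⊤)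
    (hloc : ∀ (a b : Cn n) (c : ℂ), a + c • b ∈ D → LocalSubmean (fun ζ => u (a + ζ • b)) c) :
    PSHOn u D := by
  refine pshOn_iff_circleSubmean.2 ⟨husc, fun a b c r hr hdisc => ?_⟩
  have hline : Continuous fun ζ : ℂ => a + ζ • b := by fun_prop
  exact circleSubmean_of_localSubmean hr (husc.comp hline.continuousOn hdisc)
    (fun ζ hζ => htop _ (hdisc ζ hζ)) fun ζ hζ => hloc a b ζ (hdisc ζ (ball_subset_closedBall hζ))

lemma PSHOn.union (hU : IsOpen U) (hV : IsOpen V) (huU : PSHOn u U) (huV : PSHOn u V)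
    (htop : ∀ x ∈ U ∪ V, u x < ⊤) : PSHOn u (U ∪ V) := by
  refine pshOn_of_localSubmean (fun x hx y hy => nhdsWithin_le_nhds ?_) htop fun a b c hc => ?_
  · rcases hx with hx | hx
    exacts [hU.nhdsWithin_eq hx ▸ huU.1 x hx y hy, hV.nhdsWithin_eq hx ▸ huV.1 x hx y hy]
  · rcases hc with hc | hc
    exacts [huU.localSubmean hU hc, huV.localSubmean hV hc]

lemma PSHOn.piecewise (hU : IsOpen U) (hV : IsOpen V) (hu : PSHOn u U) (hv : PSHOn v V)
    (huv : EqOn u v (U ∩ V)) (hutop : ∀ x ∈ U, u x < ⊤) (hvtop : ∀ x ∈ V \ U, v x < ⊤) :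
    PSHOn (U.piecewise u v) (U ∪ V) := by
  have heqU : EqOn (U.piecewise u v) u U := piecewise_eqOn U u v
  have heqV : EqOn (U.piecewise u v) v V := fun x hx => by
    by_cases hxU : x ∈ U
    · rw [heqU hxU, huv ⟨hxU, hx⟩]
    · exact piecewise_eq_of_notMem U u v hxU
  refine .union hU hV (hu.congr heqU) (hv.congr heqV) fun x hx => ?_
  by_cases hxU : x ∈ U
  · exact heqU hxU ▸ hutop x hxU
  · have hxV : x ∈ V := hx.resolve_left hxU
    exact heqV hxV ▸ hvtop x ⟨hxV, hxU⟩

end Plurisubharmonic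

section LogPole

variable {n : ℕ} {z x : Cn n} {R : ℝ}

/-- The function `x ↦ log (‖x - z‖ / R)` with its logarithmic pole at `z`, where, unlike that of
`Real.log`, its value is `⊥`. It is the Green function of the ball of radius `R` around `z`. -/
def logPole (z : Cn n) (R : ℝ) (x : Cn n) : EReal :=
  ENNReal.log ‖(R : ℂ)⁻¹ • (x - z)‖ₑ

lemma enorm_inv_smul_sub (hR : 0 < R) :
    ‖(R : ℂ)⁻¹ • (x - z)‖ₑ = ENNReal.ofReal (‖x - z‖ / R) := by
  rw [← ofReal_norm, norm_smul, norm_inv, Complex.norm_real, Real.norm_of_nonneg hR.le,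
    inv_mul_eq_div]

lemma logPole_of_ne (hR : 0 < R) (hx : x ≠ z) : logPole z R x = (Real.log (‖x - z‖ / R) : ℝ) := by
  rw [logPole, enorm_inv_smul_sub hR,
    ENNReal.log_ofReal_of_pos (div_pos (norm_pos_iff.2 (sub_ne_zero.2 hx)) hR)]

lemma logPole_neg (hx : x ∈ ball z R) : logPole z R x < 0 := by
  have hxR : ‖x - z‖ < R := mem_ball_iff_norm.1 hx
  have hR : 0 < R := (norm_nonneg _).trans_lt hxR
  rw [logPole, ENNReal.log_lt_zero_iff, enorm_inv_smul_sub hR, ENNReal.ofReal_lt_one,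
    div_lt_one hR]
  exact hxR

lemma logPole_lt_top : logPole z R x < ⊤ :=
  ENNReal.log_lt_top_iff.2 enorm_lt_top

lemma coe_log_div_le_logPole {s : ℝ} (hs : 0 < s) (hR : 0 < R) (hx : s ≤ ‖x - z‖) :
    ((Real.log (s / R) : ℝ) : EReal) ≤ logPole z R x := by
  rw [logPole_of_ne hR (sub_ne_zero.1 (norm_pos_iff.1 (hs.trans_le hx))), EReal.coe_le_coe_iff]
  gcongr

lemma logPole_le (hR : 0 < R) (x : Cn n) :
    logPole z R x ≤ ((Real.log ‖x - z‖ + -Real.log R : ℝ) : EReal) := by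
  rcases eq_or_ne x z with rfl | hx
  · simp [logPole]
  · rw [logPole_of_ne hR hx, Real.log_div (norm_ne_zero_iff.2 (sub_ne_zero.2 hx)) hR.ne',
      sub_eq_add_neg]

lemma pshOn_logPole (z : Cn n) (R : ℝ) (D : Set (Cn n)) : PSHOn (logPole z R) D := by
  have hcont : Continuous (logPole z R) := by
    unfold logPole
    exact ENNReal.continuous_log.comp (by fun_prop)
  refine pshOn_of_localSubmean hcont.continuousOn.upperSemicontinuousOn
    (fun _ _ => logPole_lt_top) fun a b c _ => localSubmean_log_enorm ?_
  fun_prop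

theorem le_greenFn_of_le_log {D : Set (Cn n)} (hD : IsOpen D) {ψ : Cn n → EReal} (hψ : PSHOn ψ D)
    (hψneg : ∀ x ∈ D, ψ x < 0) {r s : ℝ} (hs : 0 < s) (hsr : s < r) (hrD : ball z r ⊆ D)
    (hDR : D ⊆ ball z R) (hψle : ∀ x ∈ ball z r, ψ x ≤ (Real.log (s / R) : ℝ)) {w : Cn n}
    (hw : w ∈ D \ ball z r) : ψ w ≤ greenFn D z w := by
  have hzr : z ∈ ball z r := mem_ball_self (hs.trans hsr)
  have hR : 0 < R := pos_of_mem_ball (hDR (hrD hzr))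
  set u : Cn n → EReal := (ball z r).piecewise (logPole z R) fun x => logPole z R x ⊔ ψ x with hu
  have hneg (x : Cn n) (hx : x ∈ D) : logPole z R x ⊔ ψ x < 0 :=
    max_lt (logPole_neg (hDR hx)) (hψneg x hx)
  have hcover : ball z r ∪ D \ closedBall z s = D :=
    union_sdiff_cancel' (closedBall_subset_ball hsr) hrD
  have hagree : EqOn (logPole z R) (fun x => logPole z R x ⊔ ψ x)
      (ball z r ∩ (D \ closedBall z s)) := fun x ⟨hxr, _, hxs⟩ => by
    rw [mem_closedBall_iff_norm, not_le] at hxs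
    exact (sup_eq_left.2 ((hψle x hxr).trans (coe_log_div_le_logPole hs hR hxs.le))).symm
  have hu_psh : PSHOn u D := by
    rw [← hcover]
    exact .piecewise isOpen_ball (hD.sdiff isClosed_closedBall) (pshOn_logPole z R _)
      ((pshOn_logPole z R _).sup (hψ.mono sdiff_subset)) hagree (fun _ _ => logPole_lt_top)
      fun x hx => (hneg x hx.1.1).trans EReal.zero_lt_top
  have hu_neg (x : Cn n) (hx : x ∈ D) : u x < 0 :=
    (piecewise_le (fun _ _ => le_sup_left) (fun _ _ => le_rfl) x).trans_lt (hneg x hx)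
  have hu_log : ∀ᶠ x in 𝓝[D] z, u x ≤ ((Real.log ‖x - z‖ + -Real.log R : ℝ) : EReal) := by
    filter_upwards [mem_nhdsWithin_of_mem_nhds (isOpen_ball.mem_nhds hzr)] with x hx
    rw [hu, piecewise_eq_of_mem _ _ _ hx]
    exact logPole_le hR x
  calc ψ w ≤ u w := by
        rw [hu, piecewise_eq_of_notMem _ _ _ hw.2]
        exact le_sup_right
    _ ≤ greenFn D z w := le_sSup ⟨u, hu_psh, hu_neg, ⟨_, hu_log⟩, rfl⟩

end LogPole

lemma exists_neg_forall_le_of_isCompact {X : Type*} [TopologicalSpace X] {K : Set X}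
    (hK : IsCompact K) {u : X → EReal} (hu : UpperSemicontinuousOn u K)
    (hneg : ∀ x ∈ K, u x < 0) : ∃ c : ℝ, c < 0 ∧ ∀ x ∈ K, u x ≤ c := by
  rcases K.eq_empty_or_nonempty with rfl | hne
  · exact ⟨-1, neg_one_lt_zero, fun _ hx => hx.elim⟩
  · obtain ⟨x₀, hx₀, hmax⟩ := hu.exists_isMaxOn hne hK
    obtain ⟨c, hc, hc0⟩ := EReal.lt_iff_exists_real_btwn.1 (hneg x₀ hx₀)
    exact ⟨c, EReal.coe_neg'.1 hc0, fun x hx => (hmax hx).trans hc.le⟩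

theorem green_lower_bound_hyperconvex_general {n : ℕ} {D : Set (Cn n)} (hD : IsOpen D)
    (hDb : Bornology.IsBounded D) {φ : Cn n → EReal} (hφ : PSHOn φ D) (hφneg : ∀ x ∈ D, φ x < 0)
    {K L : Set (Cn n)} (hK : IsCompact K) (hKD : K ⊆ D) (hL : IsClosed L) (hKL : Disjoint K L) :
    ∃ m : ℝ, 0 < m ∧ ∀ z ∈ K, ∀ w ∈ D ∩ L, greenFn D z w ≥ (m : EReal) * φ w := by
  obtain ⟨δ, hδ, hthick⟩ := hK.exists_cthickening_subset_open (hD.inter hL.isOpen_compl)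
    fun z hz => ⟨hKD hz, disjoint_left.1 hKL hz⟩
  obtain ⟨c, hc, hφc⟩ := exists_neg_forall_le_of_isCompact hK.cthickening
    (hφ.1.mono fun x hx => (hthick hx).1) fun x hx => hφneg x (hthick hx).1
  obtain ⟨C, hC⟩ := isBounded_iff.1 hDb
  set A : ℝ := |Real.log (δ / 2 / (C + 1))| + 1
  have hm : 0 < A / -c := div_pos (by positivity) (neg_pos.2 hc)
  refine ⟨A / -c, hm, fun z hz w hw => ?_⟩
  have hball : ball z δ ⊆ cthickening δ K :=
    (ball_subset_thickening hz δ).trans (thickening_subset_cthickening δ K)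
  refine le_greenFn_of_le_log hD (hφ.const_mul hm) (fun x hx => ?_) (half_pos hδ)
    (half_lt_self hδ) (fun x hx => (hthick (hball hx)).1)
    (fun x hx => (hC hx (hKD hz)).trans_lt (lt_add_one C)) (fun x hx => ?_)
    ⟨hw.1, fun hwz => (hthick (hball hwz)).2 hw.2⟩
  · exact EReal.mul_neg_iff.2 (.inl ⟨EReal.coe_pos.2 hm, hφneg x hx⟩)
  · calc ((A / -c : ℝ) : EReal) * φ x ≤ (A / -c : ℝ) * c :=
          mul_le_mul_of_nonneg_left (hφc x (hball hx)) (EReal.coe_nonneg.2 hm.le)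
      _ = ((-A : ℝ) : EReal) := by
          rw [← EReal.coe_mul, div_neg, neg_mul, div_mul_cancel₀ A hc.ne]
      _ ≤ (Real.log (δ / 2 / (C + 1)) : ℝ) := EReal.coe_le_coe_iff.2 (by
          linarith [neg_abs_le (Real.log (δ / 2 / (C + 1)))])

/-- Lower bound for the pluricomplex Green function of a bounded
hyperconvex domain in terms of a negative psh exhaustion function. -/
theorem green_lower_bound_hyperconvex {n : ℕ} (D : Set (Cn n)) (hD : IsOpen D)
    (hDconn : IsConnected D) (hDb : Bornology.IsBounded D)
    (φ : Cn n → EReal) (hφ : PSHOn φ D) (hφneg : ∀ x ∈ D, φ x < 0)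
    (hexh : ∀ ε : ℝ, 0 < ε → ∃ K' : Set (Cn n), IsCompact K' ∧ K' ⊆ D ∧
      ∀ z ∈ D \ K', ((-ε : ℝ) : EReal) < φ z)
    (K L : Set (Cn n)) (hK : IsCompact K) (hKD : K ⊆ D) (hL : IsCompact L)
    (hKL : Disjoint K L) :
    ∃ m : ℝ, 0 < m ∧ ∀ z ∈ K, ∀ w ∈ D ∩ L,
      greenFn D z w ≥ (m : EReal) * φ w := by
  exact green_lower_bound_hyperconvex_general hD hDb hφ hφneg hK hKD hL.isClosed hKL
end
end
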